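/- There is a constant C_1 = C_1(C_d, C_P, λ) ≥ 1 such that for any G ⊂ X and ε > 0 there exists an open set V ⊃ G with capa_1(V) ≤ C_1(capa_1(G) + ε) and P(V,X) ≤ C_1(capa_1(G) + ε). -/

import Mathlib

open MeasureTheory Filter Metric Set
open scoped Topology ENNReal NNReal symmDiff

noncomputable section

namespace PaperBV

/-- A rectifiable curve parametrized by arc-length: a `1`-Lipschitz map on `[0, len]`. -/
structure Curve (X : Type*) [MetricSpace X] where
  len : ℝ
  len_nonneg : 0 ≤ len
  toFun : ℝ → X
  lip : LipschitzOnWith 1 toFun (Set.Icc 0 len)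

variable {X : Type*} [MetricSpace X] [MeasurableSpace X] [BorelSpace X]

/-- The curve lies in the set `A`. -/
def Curve.In (γ : Curve X) (A : Set X) : Prop :=
  ∀ t ∈ Set.Icc (0 : ℝ) γ.len, γ.toFun t ∈ A

/-- The curve integral `∫_γ g ds` of a nonnegative function, for an
arc-length parametrized curve. -/
def Curve.integral (γ : Curve X) (g : X → ℝ≥0∞) : ℝ≥0∞ :=
  ∫⁻ t in Set.Icc (0 : ℝ) γ.len, g (γ.toFun t)

/-- The upper gradient inequality `|u(x) - u(y)| ≤ ∫_γ g ds` along the curve `γ`,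
where `x, y` are the endpoints of `γ`. -/
def UGIneq (u : X → ℝ) (g : X → ℝ≥0∞) (γ : Curve X) : Prop :=
  ENNReal.ofReal |u (γ.toFun 0) - u (γ.toFun γ.len)| ≤ γ.integral g

/-- `g` is an upper gradient of `u` on `X`: `g` is nonnegative (automatic in `ℝ≥0∞`),
Borel, and the upper gradient inequality holds along every curve. -/
def IsUpperGradient (u : X → ℝ) (g : X → ℝ≥0∞) : Prop :=
  Measurable g ∧ ∀ γ : Curve X, UGIneq u g γ

/-- A family of curves has zero `1`-modulus: there is a nonnegative Borel function
`ρ ∈ L¹(X)` whose curve integral is infinite along every curve of the family. -/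
def ZeroMod (μ : Measure X) (Γ : Set (Curve X)) : Prop :=
  ∃ ρ : X → ℝ≥0∞, Measurable ρ ∧ (∫⁻ x, ρ x ∂μ) < ∞ ∧ ∀ γ ∈ Γ, γ.integral ρ = ∞

/-- `g` is a `1`-weak upper gradient of `u` in `A`: `g` is nonnegative, `μ`-measurable,
and the upper gradient inequality holds along `1`-a.e. curve in `A`. -/
def IsWeakUpperGradientOn (μ : Measure X) (u : X → ℝ) (g : X → ℝ≥0∞) (A : Set X) : Prop :=
  AEMeasurable g μ ∧ ZeroMod μ {γ : Curve X | γ.In A ∧ ¬ UGIneq u g γ}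

/-- A nonnegative function `g` belongs to `L¹_loc(A)`. -/
def LIntegrableLocOn (μ : Measure X) (g : X → ℝ≥0∞) (A : Set X) : Prop :=
  ∀ x ∈ A, ∃ r > (0 : ℝ), (∫⁻ y in A ∩ Metric.ball x r, g y ∂μ) < ∞

/-- `g` is the minimal `1`-weak upper gradient of `u` in `A`: a `1`-weak upper gradient
satisfying `g ≤ g'` `μ`-a.e. in `A` for every `1`-weak upper gradient `g' ∈ L¹_loc(A)`. -/
def IsMinimalWUG (μ : Measure X) (u : X → ℝ) (g : X → ℝ≥0∞) (A : Set X) : Prop :=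
  IsWeakUpperGradientOn μ u g A ∧
    ∀ g' : X → ℝ≥0∞, IsWeakUpperGradientOn μ u g' A → LIntegrableLocOn μ g' A →
      ∀ᵐ x ∂(μ.restrict A), g x ≤ g' x

/-- The Newtonian norm `‖u‖_{N^{1,1}(A)}` (valued in `ℝ≥0∞`). -/
def NNorm (μ : Measure X) (A : Set X) (u : X → ℝ) : ℝ≥0∞ :=
  (∫⁻ x in A, ENNReal.ofReal |u x| ∂μ) +
    ⨅ (g : X → ℝ≥0∞) (_ : IsWeakUpperGradientOn μ u g A), ∫⁻ x in A, g x ∂μ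

/-- `u ∈ N^{1,1}(A)`. -/
def MemN11 (μ : Measure X) (A : Set X) (u : X → ℝ) : Prop :=
  NNorm μ A u < ∞

/-- `u ∈ N^{1,1}_loc(A)`: every point of `A` has a ball `B` with `u ∈ N^{1,1}(A ∩ B)`. -/
def MemN11Loc (μ : Measure X) (A : Set X) (u : X → ℝ) : Prop :=
  ∀ x ∈ A, ∃ r > (0 : ℝ), NNorm μ (A ∩ Metric.ball x r) u < ∞

/-- `u ∈ N^{1,1}(Ω')` for every bounded open `Ω' ⊆ X`. -/
def MemN11LocBounded (μ : Measure X) (u : X → ℝ) : Prop :=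
  ∀ Ω' : Set X, IsOpen Ω' → Bornology.IsBounded Ω' → NNorm μ Ω' u < ∞

/-- `u ∈ N^{1,1}_0(Ω)`: `u ∈ N^{1,1}(X)` and `u = 0` outside `Ω`. -/
def MemN110 (μ : Measure X) (Ω : Set X) (u : X → ℝ) : Prop :=
  MemN11 μ Set.univ u ∧ ∀ x ∉ Ω, u x = 0

/-- The `1`-capacity `capa₁(A) = inf {‖u‖_{N^{1,1}(X)} : u ∈ N^{1,1}(X), u ≥ 1 on A}`. -/
def capa1 (μ : Measure X) (A : Set X) : ℝ≥0∞ :=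
  ⨅ (u : X → ℝ) (_ : MemN11 μ Set.univ u) (_ : ∀ x ∈ A, 1 ≤ u x), NNorm μ Set.univ u

/-- `U` is `1`-quasiopen: for every `ε > 0` there is an open `G` with `capa₁(G) < ε`
such that `U ∪ G` is open. -/
def QuasiOpen (μ : Measure X) (U : Set X) : Prop :=
  ∀ ε : ℝ, 0 < ε → ∃ G : Set X, IsOpen G ∧ capa1 μ G < ENNReal.ofReal ε ∧ IsOpen (U ∪ G)

/-- `u ∈ L¹_loc(A)`. -/
def MemL1Loc (μ : Measure X) (A : Set X) (u : X → ℝ) : Prop :=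
  AEMeasurable u (μ.restrict A) ∧
    ∀ x ∈ A, ∃ r > (0 : ℝ), (∫⁻ y in A ∩ Metric.ball x r, ENNReal.ofReal |u y| ∂μ) < ∞

/-- `v i → u` in `L¹_loc(A)`: every `x ∈ A` has a ball `B` with `v i → u` in `L¹(A ∩ B)`. -/
def L1LocConv (μ : Measure X) (A : Set X) (v : ℕ → X → ℝ) (u : X → ℝ) : Prop :=
  ∀ x ∈ A, ∃ r > (0 : ℝ),
    Filter.Tendsto (fun i => ∫⁻ y in A ∩ Metric.ball x r, ENNReal.ofReal |v i y - u y| ∂μ)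
      Filter.atTop (𝓝 0)

/-- `u` is locally Lipschitz on `Ω`. -/
def LocLipOn (u : X → ℝ) (Ω : Set X) : Prop :=
  ∀ x ∈ Ω, ∃ r > (0 : ℝ), ∃ K : ℝ≥0, LipschitzOnWith K u (Ω ∩ Metric.ball x r)

/-- The total variation `‖Du‖(Ω)` of `u` in an open set `Ω`: the infimum of
`liminf_i ∫_Ω g_{v i} dμ` over sequences of locally Lipschitz functions `v i → u`
in `L¹_loc(Ω)`, where `g_{v i}` is the minimal `1`-weak upper gradient of `v i` in `Ω`. -/
def tvOpen (μ : Measure X) (Ω : Set X) (u : X → ℝ) : ℝ≥0∞ :=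
  ⨅ (v : ℕ → X → ℝ) (g : ℕ → X → ℝ≥0∞) (_ : ∀ i, LocLipOn (v i) Ω)
    (_ : ∀ i, IsMinimalWUG μ (v i) (g i) Ω) (_ : L1LocConv μ Ω v u),
    Filter.liminf (fun i => ∫⁻ x in Ω, g i x ∂μ) Filter.atTop

/-- The total variation `‖Du‖(A)` of `u` in an arbitrary set `A`:
`inf {‖Du‖(Ω) : Ω ⊇ A open}`. -/
def tv (μ : Measure X) (A : Set X) (u : X → ℝ) : ℝ≥0∞ :=
  ⨅ (Ω : Set X) (_ : IsOpen Ω) (_ : A ⊆ Ω), tvOpen μ Ω u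

/-- The perimeter `P(E, A) = ‖Dχ_E‖(A)` for arbitrary `A`. -/
def perim (μ : Measure X) (E A : Set X) : ℝ≥0∞ :=
  tv μ A (Set.indicator E (fun _ => (1 : ℝ)))

/-- The perimeter `P(E, Ω) = ‖Dχ_E‖(Ω)` for open `Ω`. -/
def perimOpen (μ : Measure X) (E Ω : Set X) : ℝ≥0∞ :=
  tvOpen μ Ω (Set.indicator E (fun _ => (1 : ℝ)))

/-- The measure `μ` is doubling with constant `Cd`. -/
def Doubling (μ : Measure X) (Cd : ℝ) : Prop :=
  1 ≤ Cd ∧ ∀ (x : X) (r : ℝ), 0 < r →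
    0 < μ (Metric.ball x (2 * r)) ∧
      μ (Metric.ball x (2 * r)) ≤ ENNReal.ofReal Cd * μ (Metric.ball x r) ∧
      μ (Metric.ball x r) < ∞

/-- The space supports a `(1,1)`-Poincaré inequality with constants `CP, lam`. -/
def Poincare (μ : Measure X) (CP lam : ℝ) : Prop :=
  1 ≤ CP ∧ 1 ≤ lam ∧ ∀ (x : X) (r : ℝ), 0 < r → ∀ (u : X → ℝ) (g : X → ℝ≥0∞),
    MemL1Loc μ Set.univ u → IsUpperGradient u g →
      ENNReal.ofReal (⨍ y in Metric.ball x r, |u y - ⨍ z in Metric.ball x r, u z ∂μ| ∂μ)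
        ≤ ENNReal.ofReal (CP * r) *
            ((∫⁻ y in Metric.ball x (lam * r), g y ∂μ) / μ (Metric.ball x (lam * r)))

/-- The restricted spherical Hausdorff content of codimension one. -/
def HR (μ : Measure X) (R : ℝ) (A : Set X) : ℝ≥0∞ :=
  ⨅ (c : ℕ → X) (r : ℕ → ℝ) (_ : ∀ i, 0 < r i ∧ r i ≤ R)
    (_ : A ⊆ ⋃ i, Metric.ball (c i) (r i)),
    ∑' i, μ (Metric.ball (c i) (r i)) / ENNReal.ofReal (r i)

/-- The codimension-one Hausdorff measure `H(A) = lim_{R → 0} H_R(A)`. -/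
def Hcodim (μ : Measure X) (A : Set X) : ℝ≥0∞ :=
  ⨆ (R : ℝ) (_ : 0 < R), HR μ R A

/-- The lower approximate limit `u^∧`. -/
def lowerApprox (μ : Measure X) (u : X → ℝ) (x : X) : EReal :=
  sSup ((fun t : ℝ => (t : EReal)) ''
    {t : ℝ | Filter.Tendsto
      (fun r => μ (Metric.ball x r ∩ {y | u y < t}) / μ (Metric.ball x r))
      (𝓝[>] (0 : ℝ)) (𝓝 0)})

/-- The upper approximate limit `u^∨`. -/
def upperApprox (μ : Measure X) (u : X → ℝ) (x : X) : EReal :=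
  sInf ((fun t : ℝ => (t : EReal)) ''
    {t : ℝ | Filter.Tendsto
      (fun r => μ (Metric.ball x r ∩ {y | t < u y}) / μ (Metric.ball x r))
      (𝓝[>] (0 : ℝ)) (𝓝 0)})

/-- `u ∈ BV_loc(X)`: `u ∈ L¹_loc(X)` with `‖Du‖(Ω') < ∞` for every bounded open `Ω'`. -/
def MemBVLoc (μ : Measure X) (u : X → ℝ) : Prop :=
  MemL1Loc μ Set.univ u ∧
    ∀ Ω' : Set X, IsOpen Ω' → Bornology.IsBounded Ω' → tvOpen μ Ω' u < ∞

/-- The measure-theoretic interior `I_E`. -/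
def mInterior (μ : Measure X) (E : Set X) : Set X :=
  {x | Filter.Tendsto (fun r => μ (Metric.ball x r \ E) / μ (Metric.ball x r))
    (𝓝[>] (0 : ℝ)) (𝓝 0)}

/-- The measure-theoretic exterior `O_E`. -/
def mExterior (μ : Measure X) (E : Set X) : Set X :=
  {x | Filter.Tendsto (fun r => μ (Metric.ball x r ∩ E) / μ (Metric.ball x r))
    (𝓝[>] (0 : ℝ)) (𝓝 0)}

/-- The measure-theoretic boundary `∂*E`: the points where both `E` and its complement
have positive upper density. -/
def mBoundary (μ : Measure X) (E : Set X) : Set X :=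
  {x | 0 < Filter.limsup (fun r => μ (Metric.ball x r ∩ E) / μ (Metric.ball x r))
        (𝓝[>] (0 : ℝ)) ∧
       0 < Filter.limsup (fun r => μ (Metric.ball x r \ E) / μ (Metric.ball x r))
        (𝓝[>] (0 : ℝ))}

/-!
Take `u ≥ 1` on `G` with an upper gradient `g` and `‖u‖₁ + ‖g‖₁` close to `capa₁(G)`; by the
Vitali–Carathéodory theorem `g` may be taken lower semicontinuous. The superlevel sets of `u` need
not be open, so `u` is replaced by the distance to `K = {u < 1/2}`, slightly shrunk to a closed
set, in the length metric weighted by `h = 1 + g`. Relaxing curves to coarse curves, which may jump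
by at most `δ`, and `h` to a bounded lower envelope at scale `δ` turns this distance into a
Lipschitz function with upper gradient `h` off `K`. These functions increase as `δ → 0`, so each
superlevel set of their supremum is open, and its capacity and, by the coarea inequality, its
perimeter for a suitable level are controlled by `∫_{X \ K} h`. Lower semicontinuity of `h` and
compactness of balls ensure that at a point of `G` the supremum is at least `1/2`: otherwise coarse
curves would converge to a curve from `K` to that point on which `∫ h ≤ 1/2`, while `u` jumps by
more than `1/2`.

The Poincaré inequality enters only through the measurability of `u`: on the sets where the maximal
function of `g` is bounded, `u` is locally Lipschitz, and these sets exhaust `X` almost everywhere.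
-/

section Curves

variable {Y : Type*} [MetricSpace Y]

lemma Curve.continuousOn (γ : Curve Y) : ContinuousOn γ.toFun (Icc 0 γ.len) :=
  γ.lip.continuousOn

lemma Curve.dist_le (γ : Curve Y) {s t : ℝ} (hs : s ∈ Icc 0 γ.len) (ht : t ∈ Icc 0 γ.len) :
    dist (γ.toFun s) (γ.toFun t) ≤ |s - t| := by
  simpa [Real.dist_eq] using γ.lip.dist_le_mul s hs t ht

/-- The restriction of a curve to a subinterval `[a, b]` of its domain, with the parameter
translated so that it starts at `0`. -/
def Curve.sub (γ : Curve Y) {a b : ℝ} (ha : 0 ≤ a) (hab : a ≤ b) (hb : b ≤ γ.len) : Curve Y where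
  len := b - a
  len_nonneg := sub_nonneg.2 hab
  toFun t := γ.toFun (t + a)
  lip s hs t ht := by
    have hmem : ∀ r ∈ Icc 0 (b - a), r + a ∈ Icc 0 γ.len := fun r hr =>
      ⟨add_nonneg hr.1 ha, (le_sub_iff_add_le.1 hr.2).trans hb⟩
    simpa using γ.lip (hmem s hs) (hmem t ht)

lemma Curve.integral_sub (γ : Curve Y) {a b : ℝ} (ha : 0 ≤ a) (hab : a ≤ b) (hb : b ≤ γ.len)
    (g : Y → ℝ≥0∞) : (γ.sub ha hab hb).integral g = ∫⁻ t in Icc a b, g (γ.toFun t) := by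
  have hpre : (· + a) ⁻¹' Icc a b = Icc 0 (b - a) := by simp
  rw [← (measurePreserving_add_right volume a).setLIntegral_comp_preimage_emb
    (measurableEmbedding_addRight a), hpre]
  rfl

lemma Curve.integral_sub_le (γ : Curve Y) {a b : ℝ} (ha : 0 ≤ a) (hab : a ≤ b) (hb : b ≤ γ.len)
    (g : Y → ℝ≥0∞) : (γ.sub ha hab hb).integral g ≤ γ.integral g := by
  rw [γ.integral_sub]
  exact lintegral_mono_set (Icc_subset_Icc ha hb)

lemma ugIneq_sub_iff {γ : Curve Y} {u : Y → ℝ} {g : Y → ℝ≥0∞} {a b : ℝ} {ha : 0 ≤ a}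
    {hab : a ≤ b} {hb : b ≤ γ.len} : UGIneq u g (γ.sub ha hab hb) ↔
      ENNReal.ofReal |u (γ.toFun b) - u (γ.toFun a)| ≤ ∫⁻ t in Icc a b, g (γ.toFun t) := by
  rw [UGIneq, γ.integral_sub, abs_sub_comm]
  simp [Curve.sub]

lemma UGIneq.mono {u : Y → ℝ} {g h : Y → ℝ≥0∞} {γ : Curve Y} (hγ : UGIneq u g γ)
    (hgh : ∀ x, g x ≤ h x) : UGIneq u h γ :=
  hγ.trans (lintegral_mono fun _ => hgh _)

end Curves

lemma Curve.aemeasurable (γ : Curve X) :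
    AEMeasurable γ.toFun (volume.restrict (Icc 0 γ.len)) :=
  γ.continuousOn.aemeasurable measurableSet_Icc

lemma Curve.aemeasurable_comp (γ : Curve X) {g : X → ℝ≥0∞} (hg : Measurable g) :
    AEMeasurable (fun t => g (γ.toFun t)) (volume.restrict (Icc 0 γ.len)) :=
  hg.comp_aemeasurable γ.aemeasurable

lemma Curve.integral_tsum (γ : Curve X) {ι : Type*} [Countable ι] {ρ : ι → X → ℝ≥0∞}
    (hρ : ∀ i, Measurable (ρ i)) :
    γ.integral (fun x => ∑' i, ρ i x) = ∑' i, γ.integral (ρ i) :=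
  lintegral_tsum fun i => γ.aemeasurable_comp (hρ i)

lemma Curve.integral_const_mul (γ : Curve X) {ρ : X → ℝ≥0∞} (hρ : Measurable ρ) (c : ℝ≥0∞) :
    γ.integral (fun x => c * ρ x) = c * γ.integral ρ :=
  lintegral_const_mul'' c (γ.aemeasurable_comp hρ)

/-! ### Families of zero modulus -/

lemma ZeroMod.mono {Y : Type*} [MetricSpace Y] [MeasurableSpace Y] {μ : Measure Y}
    {Γ Γ' : Set (Curve Y)} (h : ZeroMod μ Γ') (hΓ : Γ ⊆ Γ') : ZeroMod μ Γ := by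
  obtain ⟨ρ, hρ, hint, htop⟩ := h
  exact ⟨ρ, hρ, hint, fun γ hγ => htop γ (hΓ hγ)⟩

variable {μ : Measure X} {u : X → ℝ} {g : X → ℝ≥0∞}

lemma ZeroMod.iUnion {ι : Type*} [Countable ι] {Γ : ι → Set (Curve X)}
    (h : ∀ i, ZeroMod μ (Γ i)) : ZeroMod μ (⋃ i, Γ i) := by
  choose ρ hρ hint htop using h
  obtain ⟨δ, δ_pos, δ_sum⟩ := ENNReal.exists_pos_sum_of_countable' one_ne_zero ι
  choose c c_pos hc using fun i => ENNReal.exists_nnreal_pos_mul_lt (hint i).ne (δ_pos i).ne'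
  have hcρ : ∀ i, Measurable fun x => c i * ρ i x := fun i => (hρ i).const_mul _
  refine ⟨fun x => ∑' i, c i * ρ i x, Measurable.tsum hcρ, ?_, fun γ hγ => ?_⟩
  · calc ∫⁻ x, ∑' i, c i * ρ i x ∂μ = ∑' i, c i * ∫⁻ x, ρ i x ∂μ := by
          rw [lintegral_tsum fun i => (hcρ i).aemeasurable]
          exact tsum_congr fun i => lintegral_const_mul _ (hρ i)
      _ ≤ ∑' i, δ i := ENNReal.tsum_le_tsum fun i => (hc i).le
      _ < ∞ := δ_sum.trans ENNReal.one_lt_top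
  · obtain ⟨i, hi⟩ := mem_iUnion.1 hγ
    rw [γ.integral_tsum hcρ]
    refine top_unique (le_trans (le_of_eq ?_) (ENNReal.le_tsum i))
    rw [γ.integral_const_mul (hρ i), htop i γ hi,
      ENNReal.mul_top (ENNReal.coe_ne_zero.2 (c_pos i).ne')]

lemma ZeroMod.union {Γ Γ' : Set (Curve X)} (h : ZeroMod μ Γ) (h' : ZeroMod μ Γ') :
    ZeroMod μ (Γ ∪ Γ') := by
  rw [union_eq_iUnion]
  exact ZeroMod.iUnion (Bool.forall_bool.2 ⟨h', h⟩)

lemma zeroMod_not_ae_notMem_of_null {N : Set X} (hN : μ N = 0) :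
    ZeroMod μ {γ : Curve X | ¬ ∀ᵐ t ∂volume.restrict (Icc 0 γ.len), γ.toFun t ∉ N} := by
  have hmeas : Measurable ((toMeasurable μ N).indicator fun _ => (∞ : ℝ≥0∞)) :=
    measurable_const.indicator (measurableSet_toMeasurable _ _)
  refine ⟨_, hmeas, ?_, fun γ hγ => ?_⟩
  · rw [lintegral_indicator (measurableSet_toMeasurable _ _)]
    simp [hN]
  · by_contra hfin
    refine hγ ?_
    filter_upwards [ae_lt_top' (γ.aemeasurable_comp hmeas) hfin] with t ht htN
    rw [indicator_of_mem (subset_toMeasurable _ _ htN)] at ht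
    exact ht.false

lemma lIntegrableLocOn_of_lintegral_lt_top {Y : Type*} [MetricSpace Y] [MeasurableSpace Y]
    {μ : Measure Y} {g : Y → ℝ≥0∞} (h : ∫⁻ x, g x ∂μ < ∞) (A : Set Y) :
    LIntegrableLocOn μ g A := fun _ _ =>
  ⟨1, one_pos, (setLIntegral_le_lintegral _ _).trans_lt h⟩

lemma LIntegrableLocOn.congr_ae {Y : Type*} [MetricSpace Y] [MeasurableSpace Y]
    {μ : Measure Y} {g h : Y → ℝ≥0∞} {A : Set Y} (hg : LIntegrableLocOn μ g A)
    (hgh : g =ᵐ[μ] h) : LIntegrableLocOn μ h A := by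
  intro x hx
  obtain ⟨r, hr, hfin⟩ := hg x hx
  exact ⟨r, hr, by rwa [← lintegral_congr_ae (ae_restrict_of_ae hgh)]⟩

lemma LIntegrableLocOn.setLIntegral_lt_top {Y : Type*} [MetricSpace Y] [MeasurableSpace Y]
    {μ : Measure Y} {g : Y → ℝ≥0∞} (h : LIntegrableLocOn μ g univ) {K : Set Y}
    (hK : IsCompact K) : ∫⁻ y in K, g y ∂μ < ∞ := by
  refine hK.induction_on (p := fun s => ∫⁻ y in s, g y ∂μ < ∞) (by simp)
    (fun s t hst ht => (lintegral_mono_set hst).trans_lt ht)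
    (fun s t hs ht => (lintegral_union_le _ _ _).trans_lt (ENNReal.add_lt_top.2 ⟨hs, ht⟩))
    fun y _ => ?_
  obtain ⟨r, hr, hy⟩ := h y (mem_univ y)
  exact ⟨ball y r, nhdsWithin_le_nhds (ball_mem_nhds y hr), by simpa using hy⟩

lemma zeroMod_integral_eq_top [ProperSpace X] (hg : Measurable g)
    (h : LIntegrableLocOn μ g univ) : ZeroMod μ {γ : Curve X | γ.integral g = ∞} := by
  rcases isEmpty_or_nonempty X with hX | ⟨⟨x₀⟩⟩
  · exact ⟨0, measurable_zero, by simp, fun γ _ => (hX.false (γ.toFun 0)).elim⟩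
  have hball : ∀ n : ℕ,
      ZeroMod μ {γ : Curve X | γ.integral ((closedBall x₀ n).indicator g) = ∞} := fun n => by
    refine ⟨_, hg.indicator measurableSet_closedBall, ?_, fun γ hγ => hγ⟩
    rw [lintegral_indicator measurableSet_closedBall]
    exact h.setLIntegral_lt_top (isCompact_closedBall x₀ n)
  refine (ZeroMod.iUnion hball).mono fun γ hγ => ?_
  obtain ⟨r, hr⟩ := (isBounded_iff_subset_closedBall x₀).1
    (isCompact_Icc.image_of_continuousOn γ.continuousOn).isBounded
  obtain ⟨n, hn⟩ := exists_nat_ge r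
  refine mem_iUnion.2 ⟨n, Eq.trans ?_ hγ⟩
  refine setLIntegral_congr_fun measurableSet_Icc fun t ht => indicator_of_mem ?_ g
  exact closedBall_subset_closedBall hn (hr (mem_image_of_mem _ ht))

/-! ### Upper gradients and derivatives along curves -/

lemma ae_abs_deriv_le_of_abs_sub_le_integral {f G : ℝ → ℝ} {a b : ℝ} (hab : a ≤ b)
    (hG : IntegrableOn G (Icc a b)) (hG0 : ∀ t, 0 ≤ G t)
    (h : ∀ s t, a ≤ s → s ≤ t → t ≤ b → |f t - f s| ≤ ∫ x in s..t, G x) :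
    ∀ᵐ t ∂volume.restrict (Icc a b), |deriv f t| ≤ G t := by
  have hint : IntervalIntegrable G volume a b :=
    (intervalIntegrable_iff_integrableOn_Icc_of_le hab).2 hG
  rw [← restrict_Ioo_eq_restrict_Icc, ae_restrict_iff' measurableSet_Ioo]
  filter_upwards [hint.ae_hasDerivAt_integral] with t hderiv ht
  have hderiv := hderiv (by rw [uIcc_of_le hab]; exact Ioo_subset_Icc_self ht) a left_mem_uIcc
  by_cases hf : DifferentiableAt ℝ f t
  swap
  · simpa only [deriv_zero_of_not_differentiableAt hf, abs_zero] using hG0 t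
  have hright : 𝓝[>] t ≤ 𝓝[≠] t := nhdsWithin_mono t fun _ hx => ne_of_gt hx
  refine le_of_tendsto_of_tendsto (hf.hasDerivAt.tendsto_slope.mono_left hright).abs
    (hderiv.tendsto_slope.mono_left hright) ?_
  filter_upwards [Ioo_mem_nhdsGT ht.2] with s hs
  have hint' : ∀ r ∈ Icc a b, IntervalIntegrable G volume a r := fun r hr =>
    hint.mono_set (uIcc_subset_uIcc_left (by rwa [uIcc_of_le hab]))
  rw [slope_def_field, slope_def_field, abs_div, abs_of_pos (sub_pos.2 hs.1),
    intervalIntegral.integral_interval_sub_left (hint' s ⟨(ht.1.trans hs.1).le, hs.2.le⟩)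
      (hint' t ⟨ht.1.le, ht.2.le⟩)]
  exact div_le_div_of_nonneg_right (h t s ht.1.le hs.1.le hs.2.le) (sub_pos.2 hs.1).le

lemma ae_enorm_deriv_le_of_forall_ugIneq_sub {Y : Type*} [MetricSpace Y] {u : Y → ℝ}
    {g : Y → ℝ≥0∞} {γ : Curve Y}
    (hg : AEMeasurable (fun t => g (γ.toFun t)) (volume.restrict (Icc 0 γ.len)))
    (hfin : γ.integral g ≠ ∞)
    (h : ∀ {a b : ℝ} (ha : 0 ≤ a) (hab : a ≤ b) (hb : b ≤ γ.len),
      UGIneq u g (γ.sub ha hab hb)) :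
    ∀ᵐ t ∂volume.restrict (Icc 0 γ.len), ‖deriv (u ∘ γ.toFun) t‖ₑ ≤ g (γ.toFun t) := by
  have hg_lt := ae_lt_top' hg hfin
  have hderiv := ae_abs_deriv_le_of_abs_sub_le_integral (f := u ∘ γ.toFun) γ.len_nonneg
    (integrable_toReal_of_lintegral_ne_top hg hfin) (fun _ => ENNReal.toReal_nonneg)
    fun s t hs hst ht => by
      have hmono : volume.restrict (Icc s t) ≤ volume.restrict (Icc 0 γ.len) :=
        Measure.restrict_mono (Icc_subset_Icc hs ht) le_rfl
      rw [intervalIntegral.integral_of_le hst, ← integral_Icc_eq_integral_Ioc,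
        integral_toReal (hg.mono_measure hmono) (ae_mono hmono hg_lt)]
      exact (ENNReal.ofReal_le_iff_le_toReal
        (ne_top_of_le_ne_top hfin (lintegral_mono' hmono le_rfl))).1
        (ugIneq_sub_iff.1 (h hs hst ht))
  filter_upwards [hderiv] with t ht
  rw [Real.enorm_eq_ofReal_abs]
  exact ENNReal.ofReal_le_of_le_toReal ht

lemma IsWeakUpperGradientOn.zeroMod_not_ae_enorm_deriv_le [ProperSpace X]
    (hg : IsWeakUpperGradientOn μ u g univ) (hloc : LIntegrableLocOn μ g univ) :
    ZeroMod μ {γ : Curve X | ¬ ∀ᵐ t ∂volume.restrict (Icc 0 γ.len),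
      ‖deriv (u ∘ γ.toFun) t‖ₑ ≤ g (γ.toFun t)} := by
  obtain ⟨hgm, ρ, hρ, hρint, hρtop⟩ := hg
  have hne := zeroMod_not_ae_notMem_of_null (μ := μ) (N := {x | g x ≠ hgm.mk g x}) hgm.ae_eq_mk
  have htop := zeroMod_integral_eq_top hgm.measurable_mk (hloc.congr_ae hgm.ae_eq_mk)
  have hρ_top : ZeroMod μ {γ : Curve X | γ.integral ρ = ∞} := ⟨ρ, hρ, hρint, fun γ hγ => hγ⟩
  refine (hne.union (htop.union hρ_top)).mono fun γ hγ => ?_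
  by_contra hcon
  simp only [mem_union, mem_ofPred_eq, not_or, not_not] at hcon
  obtain ⟨hγg, hγfin, hγρ⟩ := hcon
  have hγeq : (fun t => g (γ.toFun t)) =ᵐ[volume.restrict (Icc 0 γ.len)]
      fun t => hgm.mk g (γ.toFun t) := hγg
  refine hγ (ae_enorm_deriv_le_of_forall_ugIneq_sub
    ((γ.aemeasurable_comp hgm.measurable_mk).congr hγeq.symm) ?_ fun ha hab hb => ?_)
  · rwa [Curve.integral, lintegral_congr_ae hγeq]
  · by_contra hfail
    have := hρtop (γ.sub ha hab hb) ⟨fun _ _ => mem_univ _, hfail⟩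
    exact hγρ (top_unique (this ▸ γ.integral_sub_le ha hab hb ρ))

lemma ofReal_abs_sub_le_lintegral_enorm_deriv {f : ℝ → ℝ} {C : ℝ≥0} {a b : ℝ} (hab : a ≤ b)
    (hf : LipschitzOnWith C f (Icc a b)) :
    ENNReal.ofReal |f a - f b| ≤ ∫⁻ t in Icc a b, ‖deriv f t‖ₑ := by
  rw [← uIcc_of_le hab] at hf
  calc ENNReal.ofReal |f a - f b| = ‖∫ t in a..b, deriv f t‖ₑ := by
        rw [hf.absolutelyContinuousOnInterval.integral_deriv_eq_sub, abs_sub_comm,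
          Real.enorm_eq_ofReal_abs]
    _ ≤ ∫⁻ t in Ioc a b, ‖deriv f t‖ₑ := by
        rw [intervalIntegral.integral_of_le hab]
        exact enorm_integral_le_lintegral_enorm _
    _ ≤ ∫⁻ t in Icc a b, ‖deriv f t‖ₑ := lintegral_mono_set Ioc_subset_Icc_self

lemma ugIneq_of_ae_enorm_deriv_le {Y : Type*} [MetricSpace Y] {u : Y → ℝ} {C : ℝ≥0}
    (hu : LipschitzWith C u) {g : Y → ℝ≥0∞} {γ : Curve Y}
    (h : ∀ᵐ t ∂volume.restrict (Icc 0 γ.len), ‖deriv (u ∘ γ.toFun) t‖ₑ ≤ g (γ.toFun t)) :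
    UGIneq u g γ :=
  (ofReal_abs_sub_le_lintegral_enorm_deriv γ.len_nonneg
    (hu.comp_lipschitzOnWith γ.lip)).trans (lintegral_mono_ae h)

/-! ### Minimal weak upper gradients of Lipschitz functions -/

section Minimal

variable [ProperSpace X] {C : ℝ≥0}

lemma IsWeakUpperGradientOn.iInf {ι : Type*} [Countable ι] (hu : LipschitzWith C u)
    {g : ι → X → ℝ≥0∞} (hg : ∀ i, IsWeakUpperGradientOn μ u (g i) univ)
    (hloc : ∀ i, LIntegrableLocOn μ (g i) univ) :
    IsWeakUpperGradientOn μ u (fun x => ⨅ i, g i x) univ := by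
  refine ⟨AEMeasurable.iInf fun i => (hg i).1, (ZeroMod.iUnion fun i =>
    (hg i).zeroMod_not_ae_enorm_deriv_le (hloc i)).mono ?_⟩
  rintro γ ⟨-, hγ⟩
  by_contra hcon
  simp only [mem_iUnion, mem_ofPred_eq, not_exists, not_not] at hcon
  refine hγ (ugIneq_of_ae_enorm_deriv_le hu ?_)
  filter_upwards [ae_all_iff.2 hcon] with t ht using le_iInf ht

lemma IsWeakUpperGradientOn.inf (hu : LipschitzWith C u) {g h : X → ℝ≥0∞}
    (hg : IsWeakUpperGradientOn μ u g univ) (hh : IsWeakUpperGradientOn μ u h univ)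
    (hgloc : LIntegrableLocOn μ g univ) (hhloc : LIntegrableLocOn μ h univ) :
    IsWeakUpperGradientOn μ u (g ⊓ h) univ := by
  have := IsWeakUpperGradientOn.iInf hu (g := fun b => cond b g h) (Bool.forall_bool.2 ⟨hh, hg⟩)
    (Bool.forall_bool.2 ⟨hhloc, hgloc⟩)
  simp only [iInf_bool_eq] at this
  exact this

lemma exists_isWeakUpperGradientOn_forall_lintegral_le (hu : LipschitzWith C u)
    (hg : IsWeakUpperGradientOn μ u g univ) (hint : ∫⁻ x, g x ∂μ < ∞) :
    ∃ m, IsWeakUpperGradientOn μ u m univ ∧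
      ∀ h, IsWeakUpperGradientOn μ u h univ → ∫⁻ x, m x ∂μ ≤ ∫⁻ x, h x ∂μ := by
  set S : Set ℝ≥0∞ :=
    {a | ∃ h, IsWeakUpperGradientOn μ u h univ ∧ ∫⁻ x, h x ∂μ < ∞ ∧ ∫⁻ x, h x ∂μ = a}
  obtain ⟨a, -, ha, haS⟩ :=
    exists_seq_tendsto_sInf (S := S) ⟨_, g, hg, hint, rfl⟩ (OrderBot.bddBelow S)
  choose k hk hkint hka using haS
  refine ⟨fun x => ⨅ n, k n x, .iInf hu hk fun n =>
    lIntegrableLocOn_of_lintegral_lt_top (hkint n) _, fun h hh => ?_⟩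
  have hle_sInf : ∫⁻ x, ⨅ n, k n x ∂μ ≤ sInf S := ge_of_tendsto' ha fun n =>
    (lintegral_mono fun x => iInf_le _ n).trans (hka n).le
  rcases eq_top_or_lt_top (∫⁻ x, h x ∂μ) with htop | hlt
  · exact htop ▸ le_top
  · exact hle_sInf.trans (sInf_le ⟨h, hh, hlt, rfl⟩)

lemma exists_isMinimalWUG (hu : LipschitzWith C u) (hg : IsWeakUpperGradientOn μ u g univ)
    (hint : ∫⁻ x, g x ∂μ < ∞) :
    ∃ m, IsMinimalWUG μ u m univ ∧ ∫⁻ x, m x ∂μ ≤ ∫⁻ x, g x ∂μ := by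
  obtain ⟨m, hm, hmin⟩ := exists_isWeakUpperGradientOn_forall_lintegral_le hu hg hint
  have hmint : ∫⁻ x, m x ∂μ < ∞ := (hmin g hg).trans_lt hint
  refine ⟨m, ⟨hm, fun h hh hloc => ?_⟩, hmin g hg⟩
  have hinf := hm.inf hu hh (lIntegrableLocOn_of_lintegral_lt_top hmint _) hloc
  have heq : m ⊓ h =ᵐ[μ] m := ae_eq_of_ae_le_of_lintegral_le
    (Eventually.of_forall fun x => inf_le_left)
    ((lintegral_mono fun x => inf_le_left).trans_lt hmint).ne hm.1 (hmin _ hinf)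
  rw [Measure.restrict_univ]
  filter_upwards [heq] with x hx
  exact hx ▸ inf_le_right

end Minimal

lemma IsUpperGradient.isWeakUpperGradientOn {Y : Type*} [MetricSpace Y] [MeasurableSpace Y]
    {u : Y → ℝ} {g : Y → ℝ≥0∞} (h : IsUpperGradient u g) (μ : Measure Y) (A : Set Y) :
    IsWeakUpperGradientOn μ u g A :=
  ⟨h.1.aemeasurable, 0, measurable_zero, by simp, fun γ hγ => (hγ.2 (h.2 γ)).elim⟩

lemma IsUpperGradient.mono {Y : Type*} [MetricSpace Y] [MeasurableSpace Y] {u : Y → ℝ}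
    {g g' : Y → ℝ≥0∞} (h : IsUpperGradient u g) (hg' : Measurable g')
    (hle : ∀ x, g x ≤ g' x) : IsUpperGradient u g' :=
  ⟨hg', fun γ => (h.2 γ).mono hle⟩

lemma IsUpperGradient.const_mul (h : IsUpperGradient u g) (c : ℝ) :
    IsUpperGradient (fun x => c * u x) (fun x => ENNReal.ofReal |c| * g x) := by
  refine ⟨h.1.const_mul _, fun γ => ?_⟩
  rw [UGIneq, γ.integral_const_mul h.1, ← mul_sub, abs_mul, ENNReal.ofReal_mul (abs_nonneg c)]
  gcongr
  exact h.2 γ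

lemma isUpperGradient_of_tendsto {Y : Type*} [MetricSpace Y] [MeasurableSpace Y] {u : Y → ℝ}
    {g : Y → ℝ≥0∞} {v : ℕ → Y → ℝ} (hv : ∀ n, IsUpperGradient (v n) g)
    (hlim : ∀ x, Tendsto (fun n => v n x) atTop (𝓝 (u x))) : IsUpperGradient u g :=
  ⟨(hv 0).1, fun γ => le_of_tendsto'
    ((ENNReal.continuous_ofReal.tendsto _).comp ((hlim _).sub (hlim _)).abs) fun n => (hv n).2 γ⟩

lemma capa1_le_of_isUpperGradient (h : IsUpperGradient u g) {A : Set X} {t : ℝ} (ht : 0 < t)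
    (hA : ∀ x ∈ A, t ≤ u x) :
    capa1 μ A ≤ ENNReal.ofReal t⁻¹ * (∫⁻ x, ENNReal.ofReal |u x| ∂μ + ∫⁻ x, g x ∂μ) := by
  have hnorm : NNorm μ univ (fun x => t⁻¹ * u x) ≤
      ENNReal.ofReal t⁻¹ * (∫⁻ x, ENNReal.ofReal |u x| ∂μ + ∫⁻ x, g x ∂μ) := by
    rw [NNorm, Measure.restrict_univ, mul_add]
    gcongr
    · simp_rw [abs_mul, ENNReal.ofReal_mul (abs_nonneg _), abs_of_pos (inv_pos.2 ht)]
      rw [lintegral_const_mul' _ _ ENNReal.ofReal_ne_top]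
    · refine iInf₂_le_of_le _ ((h.const_mul t⁻¹).isWeakUpperGradientOn μ univ) ?_
      rw [lintegral_const_mul _ h.1, abs_of_pos (inv_pos.2 ht)]
  rcases eq_top_or_lt_top (NNorm μ univ fun x => t⁻¹ * u x) with htop | hlt
  · exact le_of_le_of_eq le_top (top_unique (htop ▸ hnorm)).symm
  · refine iInf_le_of_le _ (iInf₂_le_of_le hlt (fun x hx => ?_) hnorm)
    rw [inv_mul_eq_div, one_le_div ht]
    exact hA x hx

/-! ### Pointwise slope bounds -/

/-- `ρ x` bounds the difference quotients of `u` near every point `x` that is not a local extremum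
of `u`. Local extrema are exempt because there the derivative of `u` along a curve vanishes
whenever it exists, so that `ρ` may be taken to vanish where a truncation of `u` is active. -/
def HasSlopeBound {Y : Type*} [PseudoMetricSpace Y] (u : Y → ℝ) (ρ : Y → ℝ≥0∞) : Prop :=
  ∀ x, IsLocalExtr u x ∨
    ∀ᶠ y in 𝓝 x, ENNReal.ofReal |u y - u x| ≤ ρ x * ENNReal.ofReal (dist y x)

lemma HasSlopeBound.enorm_deriv_comp_le {Y : Type*} [MetricSpace Y] {u : Y → ℝ} {ρ : Y → ℝ≥0∞}
    (h : HasSlopeBound u ρ) (γ : Curve Y) {t : ℝ} (ht : t ∈ Ioo 0 γ.len) :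
    ‖deriv (u ∘ γ.toFun) t‖ₑ ≤ ρ (γ.toFun t) := by
  have hnhds : Icc 0 γ.len ∈ 𝓝 t := Icc_mem_nhds ht.1 ht.2
  have hcont : ContinuousAt γ.toFun t := γ.continuousOn.continuousAt hnhds
  by_cases hdiff : DifferentiableAt ℝ (u ∘ γ.toFun) t
  swap
  · simp [deriv_zero_of_not_differentiableAt hdiff]
  rcases h (γ.toFun t) with hext | hslope
  · have hext' : IsLocalExtr (u ∘ γ.toFun) t := hext.comp_tendsto hcont
    simp [hext'.deriv_eq_zero]
  refine le_of_tendsto hdiff.hasDerivAt.tendsto_slope.enorm ?_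
  filter_upwards [nhdsWithin_le_nhds hnhds, nhdsWithin_le_nhds (hcont.eventually hslope),
    self_mem_nhdsWithin] with s hs hs_slope hst
  rw [slope_def_field, Real.enorm_eq_ofReal_abs, abs_div,
    ENNReal.ofReal_div_of_pos (abs_pos.2 (sub_ne_zero.2 hst))]
  refine ENNReal.div_le_of_le_mul (hs_slope.trans ?_)
  gcongr
  exact γ.dist_le hs (Ioo_subset_Icc_self ht)

lemma HasSlopeBound.isUpperGradient {Y : Type*} [MetricSpace Y] [MeasurableSpace Y] {u : Y → ℝ}
    {ρ : Y → ℝ≥0∞} (h : HasSlopeBound u ρ) {C : ℝ≥0} (hu : LipschitzWith C u)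
    (hρ : Measurable ρ) : IsUpperGradient u ρ := by
  refine ⟨hρ, fun γ => ugIneq_of_ae_enorm_deriv_le hu ?_⟩
  rw [← restrict_Ioo_eq_restrict_Icc]
  exact ae_restrict_of_forall_mem measurableSet_Ioo fun t ht => h.enorm_deriv_comp_le γ ht

/-! ### The coarea inequality for monotone limits of Lipschitz functions -/

/-- The piecewise linear function with slope `k` that vanishes on `(-∞, t]` and equals `1` on
`[t + k⁻¹, ∞)`. -/
def ramp (t : ℝ) (k : ℝ≥0) (s : ℝ) : ℝ := max 0 (min 1 (k * (s - t)))

section Ramp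

variable (t : ℝ) (k : ℝ≥0)

lemma ramp_mem_Icc (s : ℝ) : ramp t k s ∈ Icc 0 1 :=
  ⟨le_max_left _ _, max_le zero_le_one (min_le_left _ _)⟩

lemma monotone_ramp : Monotone (ramp t k) := fun r s hrs => by
  unfold ramp
  gcongr

lemma lipschitzWith_ramp : LipschitzWith k (ramp t k) := by
  have hlin : LipschitzWith k fun s : ℝ => k * (s - t) :=
    LipschitzWith.of_dist_le_mul fun r s => by
      rw [Real.dist_eq, Real.dist_eq, ← mul_sub, sub_sub_sub_cancel_right, abs_mul,
        abs_of_nonneg k.coe_nonneg]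
  exact (hlin.const_min 1).const_max 0

variable {t k}

lemma ramp_eq_zero {s : ℝ} (hs : s ≤ t) : ramp t k s = 0 :=
  max_eq_left ((min_le_right _ _).trans
    (mul_nonpos_of_nonneg_of_nonpos k.coe_nonneg (sub_nonpos.2 hs)))

lemma ramp_eq_one (hk : 0 < k) {s : ℝ} (hs : t + (k : ℝ)⁻¹ ≤ s) : ramp t k s = 1 := by
  have hone : 1 ≤ k * (s - t) := (inv_le_iff_one_le_mul₀' (NNReal.coe_pos.2 hk)).1
    (le_sub_iff_add_le'.2 hs)
  rw [ramp, min_eq_left hone, max_eq_right zero_le_one]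

end Ramp

lemma tendsto_ramp_of_monotone {s : ℕ → ℝ} (hs : Monotone s) (t : ℝ) [Decidable (∃ n, t < s n)] :
    Tendsto (fun n : ℕ => ramp t (n + 1) (s n)) atTop (𝓝 (if ∃ n, t < s n then 1 else 0)) := by
  split_ifs with h
  · obtain ⟨m, hm⟩ := h
    have hinv : Tendsto (fun n : ℕ => t + ((n : ℝ) + 1)⁻¹) atTop (𝓝 t) := by
      simpa using tendsto_one_div_add_atTop_nhds_zero_nat.const_add t
    refine tendsto_const_nhds.congr' ?_
    filter_upwards [hinv.eventually_lt_const hm, eventually_ge_atTop m] with n hn hmn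
    refine (ramp_eq_one (by positivity) ?_).symm
    push_cast
    exact hn.le.trans (hs hmn)
  · push Not at h
    simp only [ramp_eq_zero (h _), tendsto_const_nhds]

/-- The slope bound `k * ρ` of `ramp t k ∘ v`, cut off to the band where the ramp is neither `0`
nor `1`. -/
def bandGradient {α : Type*} (v : α → ℝ) (ρ : α → ℝ≥0∞) (k : ℝ≥0) (t : ℝ) : α → ℝ≥0∞ :=
  {x | t < v x ∧ v x < t + (k : ℝ)⁻¹}.indicator fun x => k * ρ x

lemma HasSlopeBound.ramp_comp {Y : Type*} [PseudoMetricSpace Y] {v : Y → ℝ} {ρ : Y → ℝ≥0∞}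
    (h : HasSlopeBound v ρ) {k : ℝ≥0} (hk : 0 < k) (t : ℝ) :
    HasSlopeBound (ramp t k ∘ v) (bandGradient v ρ k t) := by
  intro x
  rcases le_or_gt (v x) t with hlow | hlow
  · refine .inl (.inl (Eventually.of_forall fun y => ?_))
    simpa only [Function.comp_apply, ramp_eq_zero hlow] using (ramp_mem_Icc t k (v y)).1
  rcases le_or_gt (t + (k : ℝ)⁻¹) (v x) with hhigh | hhigh
  · refine .inl (.inr (Eventually.of_forall fun y => ?_))
    simpa only [Function.comp_apply, ramp_eq_one hk hhigh] using (ramp_mem_Icc t k (v y)).2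
  refine (h x).imp (fun hext => hext.comp_mono (monotone_ramp t k)) fun hslope => ?_
  filter_upwards [hslope] with y hy
  have hlip : |ramp t k (v y) - ramp t k (v x)| ≤ k * |v y - v x| :=
    (lipschitzWith_ramp t k).dist_le_mul _ _
  calc ENNReal.ofReal |ramp t k (v y) - ramp t k (v x)|
      ≤ k * ENNReal.ofReal |v y - v x| := by
        refine (ENNReal.ofReal_le_ofReal hlip).trans_eq ?_
        rw [ENNReal.ofReal_mul k.coe_nonneg, ENNReal.ofReal_coe_nnreal]
    _ ≤ k * (ρ x * ENNReal.ofReal (dist y x)) := by gcongr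
    _ = bandGradient v ρ k t x * ENNReal.ofReal (dist y x) := by
        rw [bandGradient, indicator_of_mem (mem_ofPred_eq ▸ ⟨hlow, hhigh⟩), mul_assoc]

lemma lintegral_bandGradient_level {α : Type*} (v : α → ℝ) (ρ : α → ℝ≥0∞) {k : ℝ≥0}
    (hk : 0 < k) (x : α) :
    ∫⁻ t, bandGradient v ρ k t x = ρ x := by
  have hband : (fun t => bandGradient v ρ k t x) =
      (Ioo (v x - (k : ℝ)⁻¹) (v x)).indicator fun _ => k * ρ x := by
    ext t
    refine indicator_eq_indicator ?_ rfl
    simp only [mem_ofPred_eq, mem_Ioo, sub_lt_iff_lt_add, and_comm]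
  have hcancel : (k : ℝ≥0∞) * ENNReal.ofReal (k : ℝ)⁻¹ = 1 := by
    rw [← NNReal.coe_inv, ENNReal.ofReal_coe_nnreal, ← ENNReal.coe_mul,
      mul_inv_cancel₀ hk.ne', ENNReal.coe_one]
  rw [hband, lintegral_indicator measurableSet_Ioo, setLIntegral_const, Real.volume_Ioo,
    sub_sub_cancel, mul_right_comm, hcancel, one_mul]

section BandGradient

variable {α : Type*} [MeasurableSpace α] {v : α → ℝ} {ρ : α → ℝ≥0∞}

lemma measurable_bandGradient_uncurry (hv : Measurable v) (hρ : Measurable ρ) (k : ℝ≥0) :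
    Measurable fun p : ℝ × α => bandGradient v ρ k p.1 p.2 := by
  have hv' : Measurable fun p : ℝ × α => v p.2 := hv.comp measurable_snd
  have hband : MeasurableSet {p : ℝ × α | p.1 < v p.2 ∧ v p.2 < p.1 + (k : ℝ)⁻¹} :=
    (measurableSet_lt measurable_fst hv').inter
      (measurableSet_lt hv' (measurable_fst.add_const _))
  exact ((hρ.comp measurable_snd).const_mul (k : ℝ≥0∞)).indicator hband

lemma measurable_bandGradient (hv : Measurable v) (hρ : Measurable ρ) (k : ℝ≥0) (t : ℝ) :
    Measurable (bandGradient v ρ k t) :=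
  (measurable_bandGradient_uncurry hv hρ k).comp measurable_prodMk_left

lemma lintegral_bandGradient_lt_top {μ : Measure α} (hρ : Measurable ρ)
    (hint : ∫⁻ x, ρ x ∂μ < ∞) (v : α → ℝ) (k : ℝ≥0) (t : ℝ) :
    ∫⁻ x, bandGradient v ρ k t x ∂μ < ∞ :=
  calc ∫⁻ x, bandGradient v ρ k t x ∂μ ≤ ∫⁻ x, k * ρ x ∂μ :=
        lintegral_mono fun x => indicator_le_self _ _ x
    _ = k * ∫⁻ x, ρ x ∂μ := lintegral_const_mul _ hρ
    _ < ∞ := ENNReal.mul_lt_top ENNReal.coe_lt_top hint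

lemma setLIntegral_lintegral_bandGradient_le {μ : Measure α} [SFinite μ] (hv : Measurable v)
    (hρ : Measurable ρ) {k : ℝ≥0} (hk : 0 < k) (s : Set ℝ) :
    ∫⁻ t in s, ∫⁻ x, bandGradient v ρ k t x ∂μ ≤ ∫⁻ x, ρ x ∂μ := by
  rw [lintegral_lintegral_swap (measurable_bandGradient_uncurry hv hρ k).aemeasurable]
  refine lintegral_mono fun x => (setLIntegral_le_lintegral _ _).trans_eq ?_
  exact lintegral_bandGradient_level v ρ hk x

lemma exists_liminf_lintegral_bandGradient_le {μ : Measure α} [SFinite μ] {v : ℕ → α → ℝ}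
    (hv : ∀ n, Measurable (v n)) (hρ : Measurable ρ) {k : ℕ → ℝ≥0} (hk : ∀ n, 0 < k n)
    {a b : ℝ} (hab : a < b) :
    ∃ t ∈ Ioo a b, liminf (fun n => ∫⁻ x, bandGradient (v n) ρ (k n) t x ∂μ) atTop ≤
      (∫⁻ x, ρ x ∂μ) / ENNReal.ofReal (b - a) := by
  have hmeas : ∀ n, Measurable fun t => ∫⁻ x, bandGradient (v n) ρ (k n) t x ∂μ := fun n =>
    (measurable_bandGradient_uncurry (hv n) hρ (k n)).lintegral_prod_right'
  obtain ⟨t, ht, hle⟩ := exists_le_setLAverage (μ := volume) (s := Ioo a b)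
    (f := fun t => liminf (fun n => ∫⁻ x, bandGradient (v n) ρ (k n) t x ∂μ) atTop)
    (by simp [Real.volume_Ioo, hab]) (by simp [Real.volume_Ioo])
    (Measurable.liminf hmeas).aemeasurable
  refine ⟨t, ht, hle.trans ?_⟩
  rw [setLAverage_eq, Real.volume_Ioo]
  gcongr
  calc ∫⁻ t in Ioo a b, liminf (fun n => ∫⁻ x, bandGradient (v n) ρ (k n) t x ∂μ) atTop
      ≤ liminf (fun n => ∫⁻ t in Ioo a b, ∫⁻ x, bandGradient (v n) ρ (k n) t x ∂μ) atTop :=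
        lintegral_liminf_le hmeas
    _ ≤ liminf (fun _ : ℕ => ∫⁻ x, ρ x ∂μ) atTop := liminf_le_liminf <|
        Eventually.of_forall fun n => setLIntegral_lintegral_bandGradient_le (hv n) hρ (hk n) _
    _ = ∫⁻ x, ρ x ∂μ := liminf_const _

end BandGradient

lemma l1LocConv_of_tendsto {Y : Type*} [MetricSpace Y] [MeasurableSpace Y] {μ : Measure Y}
    [IsLocallyFiniteMeasure μ] {w : ℕ → Y → ℝ} {f : Y → ℝ} {M : ℝ} (hw : ∀ n, Measurable (w n))
    (hbound : ∀ n x, |w n x - f x| ≤ M)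
    (hlim : ∀ x, Tendsto (fun n => w n x) atTop (𝓝 (f x))) (A : Set Y) :
    L1LocConv μ A w f := by
  intro x _
  obtain ⟨s, hs, hsfin⟩ := μ.finiteAt_nhds x
  obtain ⟨r, hr, hrs⟩ := Metric.mem_nhds_iff.1 hs
  have hf : Measurable f := measurable_of_tendsto_metrizable hw (tendsto_pi_nhds.2 hlim)
  have hfin : μ (A ∩ ball x r) < ∞ := (measure_mono (inter_subset_right.trans hrs)).trans_lt hsfin
  refine ⟨r, hr, ?_⟩
  simpa using tendsto_lintegral_of_dominated_convergence (μ := μ.restrict (A ∩ ball x r))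
    (F := fun n y => ENNReal.ofReal |w n y - f y|) (f := fun _ => 0)
    (fun _ => ENNReal.ofReal M) (fun n => ((hw n).sub hf).abs.ennreal_ofReal)
    (fun n => Eventually.of_forall fun y => ENNReal.ofReal_le_ofReal (hbound n y))
    (by simpa using ENNReal.mul_ne_top ENNReal.ofReal_ne_top hfin.ne)
    (Eventually.of_forall fun y => by
      simpa using ENNReal.tendsto_ofReal ((hlim y).sub_const (f y)).abs)

section Coarea

variable [ProperSpace X] [IsLocallyFiniteMeasure μ]

lemma perimOpen_univ_le_liminf {E : Set X} {w : ℕ → X → ℝ} {C : ℕ → ℝ≥0} {ρ : ℕ → X → ℝ≥0∞}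
    (hw : ∀ n, LipschitzWith (C n) (w n)) (hw01 : ∀ n x, w n x ∈ Icc 0 1)
    (hlim : ∀ x, Tendsto (fun n => w n x) atTop (𝓝 (E.indicator (fun _ => (1 : ℝ)) x)))
    (hρ : ∀ n, IsUpperGradient (w n) (ρ n)) (hint : ∀ n, ∫⁻ x, ρ n x ∂μ < ∞) :
    perimOpen μ E univ ≤ liminf (fun n => ∫⁻ x, ρ n x ∂μ) atTop := by
  choose m hm hmle using fun n =>
    exists_isMinimalWUG (hw n) ((hρ n).isWeakUpperGradientOn μ univ) (hint n)
  have hE01 : ∀ x, E.indicator (fun _ => (1 : ℝ)) x ∈ Icc 0 1 := fun x =>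
    isClosed_Icc.mem_of_tendsto (hlim x) (Eventually.of_forall fun n => hw01 n x)
  have hconv : L1LocConv μ univ w (E.indicator fun _ => (1 : ℝ)) :=
    l1LocConv_of_tendsto (fun n => (hw n).continuous.measurable)
      (fun n x => by
        simpa using abs_sub_le_of_le_of_le (hw01 n x).1 (hw01 n x).2 (hE01 x).1 (hE01 x).2)
      hlim univ
  refine iInf_le_of_le w (iInf_le_of_le m (iInf_le_of_le
    (fun n x _ => ⟨1, one_pos, C n, (hw n).lipschitzOnWith⟩) (iInf₂_le_of_le hm hconv ?_)))
  rw [Measure.restrict_univ]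
  exact liminf_le_liminf (Eventually.of_forall hmle)

lemma exists_perimOpen_superlevel_le {v : ℕ → X → ℝ} {C : ℕ → ℝ≥0} {ρ : X → ℝ≥0∞}
    (hv : ∀ n, LipschitzWith (C n) (v n)) (hmono : ∀ x, Monotone fun n => v n x)
    (hρ : Measurable ρ) (hslope : ∀ n, HasSlopeBound (v n) ρ) (hint : ∫⁻ x, ρ x ∂μ < ∞)
    {a b : ℝ} (hab : a < b) :
    ∃ t ∈ Ioo a b, perimOpen μ {x | ∃ n, t < v n x} univ ≤
      (∫⁻ x, ρ x ∂μ) / ENNReal.ofReal (b - a) := by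
  have hvm : ∀ n, Measurable (v n) := fun n => (hv n).continuous.measurable
  have hk : ∀ n : ℕ, 0 < (n : ℝ≥0) + 1 := fun n => by positivity
  obtain ⟨t, ht, hle⟩ := exists_liminf_lintegral_bandGradient_le (μ := μ) hvm hρ hk hab
  have hlip : ∀ n : ℕ, LipschitzWith ((n + 1) * C n) (ramp t (n + 1) ∘ v n) := fun n =>
    (lipschitzWith_ramp t (n + 1)).comp (hv n)
  refine ⟨t, ht, (perimOpen_univ_le_liminf hlip (fun n x => ramp_mem_Icc _ _ _) (fun x => ?_)
    (fun n => ((hslope n).ramp_comp (hk n) t).isUpperGradient (hlip n)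
      (measurable_bandGradient (hvm n) hρ _ t))
    fun n => lintegral_bandGradient_lt_top hρ hint (v n) _ t).trans hle⟩
  classical
  simpa only [indicator_apply, mem_ofPred_eq, Function.comp_apply] using
    tendsto_ramp_of_monotone (hmono x) t

end Coarea

/-! ### Lower envelopes of lower semicontinuous functions -/

/-- The infimum of `h` over the `δ`-ball around a point, capped by `δ⁻¹`: a bounded approximation
of `h` from below, uniform at scale `δ`. -/
def lowerEnvelope {Y : Type*} [PseudoMetricSpace Y] (h : Y → ℝ≥0∞) (δ : ℝ≥0) (x : Y) : ℝ≥0∞ :=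
  min (δ : ℝ≥0∞)⁻¹ (⨅ y ∈ ball x δ, h y)

/-- A sequence of positive scales at most `1` that decreases to `0`. -/
def scale (n : ℕ) : ℝ≥0 := ((n : ℝ≥0) + 1)⁻¹

lemma scale_pos (n : ℕ) : 0 < scale n := by
  unfold scale
  positivity

lemma antitone_scale : Antitone scale := fun m n hmn => by
  unfold scale
  gcongr

lemma scale_le_one (n : ℕ) : scale n ≤ 1 := by
  simp [scale]

lemma tendsto_scale : Tendsto scale atTop (𝓝 0) :=
  tendsto_one_div_add_atTop_nhds_zero_nat.congr fun _ => one_div _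

section LowerEnvelope

variable {Y : Type*} [PseudoMetricSpace Y] {h : Y → ℝ≥0∞} {δ η : ℝ≥0} {x y : Y}

lemma lowerEnvelope_le_inv (h : Y → ℝ≥0∞) (δ : ℝ≥0) (x : Y) :
    lowerEnvelope h δ x ≤ (δ : ℝ≥0∞)⁻¹ :=
  min_le_left _ _

lemma lowerEnvelope_le_of_dist_lt (hxy : dist x y < δ) : lowerEnvelope h δ x ≤ h y :=
  (min_le_right _ _).trans (iInf₂_le y (mem_ball'.2 hxy))

lemma one_le_lowerEnvelope (hh : ∀ x, 1 ≤ h x) (hδ : δ ≤ 1) (x : Y) : 1 ≤ lowerEnvelope h δ x :=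
  le_min (ENNReal.one_le_inv.2 (by exact_mod_cast hδ)) (le_iInf₂ fun y _ => hh y)

lemma lowerEnvelope_le_lowerEnvelope (hxy : dist x y + η ≤ δ) :
    lowerEnvelope h δ x ≤ lowerEnvelope h η y := by
  have hηδ : η ≤ δ := NNReal.coe_le_coe.1 ((le_add_of_nonneg_left dist_nonneg).trans hxy)
  refine min_le_min (ENNReal.inv_le_inv.2 (by exact_mod_cast hηδ))
    (le_iInf₂ fun z hz => iInf₂_le z ?_)
  exact ball_subset_ball' (by rwa [add_comm, dist_comm]) hz

lemma antitone_lowerEnvelope (h : Y → ℝ≥0∞) (x : Y) : Antitone fun δ => lowerEnvelope h δ x :=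
  fun η δ hηδ => lowerEnvelope_le_lowerEnvelope (by simpa using hηδ)

lemma measurable_lowerEnvelope [MeasurableSpace Y] [OpensMeasurableSpace Y] (h : Y → ℝ≥0∞)
    (δ : ℝ≥0) : Measurable (lowerEnvelope h δ) := by
  refine measurable_const.min (measurable_of_Iio fun c => IsOpen.measurableSet ?_)
  have hunion : (fun x => ⨅ y ∈ ball x (δ : ℝ), h y) ⁻¹' Iio c =
      ⋃ (y : Y) (_ : h y < c), ball y δ := by
    ext x
    simp only [mem_preimage, mem_Iio, iInf_lt_iff, mem_iUnion, exists_prop, mem_ball_comm, and_comm]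
  rw [hunion]
  exact isOpen_iUnion fun y => isOpen_iUnion fun _ => isOpen_ball

lemma le_iSup_lowerEnvelope (hh : LowerSemicontinuousAt h x) :
    h x ≤ ⨆ n, lowerEnvelope h (scale n) x := by
  refine le_of_forall_lt fun c hc => ?_
  obtain ⟨c', hcc', hc'⟩ := exists_between hc
  obtain ⟨ε, hε, hball⟩ := Metric.eventually_nhds_iff_ball.1 (hh c' hc')
  have hscale : Tendsto (fun n => (scale n : ℝ)) atTop (𝓝 0) :=
    NNReal.tendsto_coe.2 tendsto_scale
  have hinv : Tendsto (fun n => (scale n : ℝ≥0∞)⁻¹) atTop (𝓝 ∞) := by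
    simpa using (ENNReal.tendsto_coe.2 tendsto_scale).inv
  obtain ⟨n, hn, hn'⟩ := ((hscale.eventually_lt_const hε).and
    (hinv.eventually_const_lt (hc'.trans_le le_top))).exists
  refine hcc'.trans_le (le_trans ?_ (le_iSup _ n))
  exact le_min hn'.le (le_iInf₂ fun y hy => (hball y (ball_subset_ball hn.le hy)).le)

end LowerEnvelope

/-! ### Coarse curves and coarse potentials -/

/-- A `1`-Lipschitz curve up to jumps of size `δ`. Extending it beyond `[0, len]` costs nothing and
spares membership conditions. -/
structure CoarseCurve (Y : Type*) [MetricSpace Y] (δ : ℝ≥0) where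
  len : ℝ
  len_nonneg : 0 ≤ len
  toFun : ℝ → Y
  dist_le : ∀ ⦃s t⦄, s ≤ t → dist (toFun s) (toFun t) ≤ t - s + δ

namespace CoarseCurve

variable {Y : Type*} [MetricSpace Y] {δ η : ℝ≥0}

/-- The weighted length `∫_γ w ds` of a coarse curve. -/
def energy (γ : CoarseCurve Y δ) (w : Y → ℝ≥0∞) : ℝ≥0∞ :=
  ∫⁻ t in Ico 0 γ.len, w (γ.toFun t)

/-- The coarse curve of length `0` at `x`. -/
def const (x : Y) : CoarseCurve Y δ where
  len := 0
  len_nonneg := le_rfl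
  toFun _ := x
  dist_le s t hst := by simpa using add_nonneg (sub_nonneg.2 hst) δ.coe_nonneg

/-- A coarse curve is one at every larger scale. -/
def ofLE (γ : CoarseCurve Y η) (hηδ : η ≤ δ) : CoarseCurve Y δ where
  __ := γ
  dist_le _ _ hst := (γ.dist_le hst).trans (by gcongr)

/-- Prolong `γ` by waiting at its endpoint for the time needed to reach `y`, then jump to `y`. -/
def appendJump (γ : CoarseCurve Y δ) {y : Y} (hy : dist (γ.toFun γ.len) y ≤ δ) :
    CoarseCurve Y δ where
  len := γ.len + dist (γ.toFun γ.len) y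
  len_nonneg := add_nonneg γ.len_nonneg dist_nonneg
  toFun t := if t < γ.len then γ.toFun t
    else if t < γ.len + dist (γ.toFun γ.len) y then γ.toFun γ.len else y
  dist_le s t hst := by
    have hwait : 0 ≤ t - s + δ := add_nonneg (sub_nonneg.2 hst) δ.coe_nonneg
    have hjump := dist_triangle (γ.toFun s) (γ.toFun γ.len) y
    have hend : s < γ.len → dist (γ.toFun s) (γ.toFun γ.len) ≤ γ.len - s + δ :=
      fun hs => γ.dist_le hs.le
    split_ifs with hs
    · exact γ.dist_le hst
    · linarith [hend hs]
    · linarith [hend hs]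
    all_goals first | linarith | rwa [dist_self]

lemma dist_le_dist_add (γ : CoarseCurve Y δ) (s t : ℝ) :
    dist (γ.toFun s) (γ.toFun t) ≤ dist s t + δ := by
  wlog hst : s ≤ t generalizing s t
  · rw [dist_comm, dist_comm s]
    exact this t s (le_of_not_ge hst)
  rw [dist_comm s, Real.dist_eq, abs_of_nonneg (sub_nonneg.2 hst)]
  exact γ.dist_le hst

lemma energy_const (x : Y) (w : Y → ℝ≥0∞) : (const x : CoarseCurve Y δ).energy w = 0 := by
  simp [energy, const]

lemma energy_mono (γ : CoarseCurve Y δ) {w w' : Y → ℝ≥0∞} (hw : ∀ x, w x ≤ w' x) :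
    γ.energy w ≤ γ.energy w' :=
  lintegral_mono fun _ => hw _

lemma len_le_of_energy_le (γ : CoarseCurve Y δ) {w : Y → ℝ≥0∞} (hw : ∀ x, 1 ≤ w x) {a : ℝ}
    (ha : 0 ≤ a) (hγ : γ.energy w ≤ ENNReal.ofReal a) : γ.len ≤ a := by
  rw [← ENNReal.ofReal_le_ofReal_iff ha]
  calc ENNReal.ofReal γ.len = ∫⁻ _ in Ico 0 γ.len, 1 := by simp
    _ ≤ γ.energy w := lintegral_mono fun t => hw _
    _ ≤ ENNReal.ofReal a := hγ

section AppendJump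

variable (γ : CoarseCurve Y δ) {y : Y} (hy : dist (γ.toFun γ.len) y ≤ δ)

lemma appendJump_toFun_zero : (γ.appendJump hy).toFun 0 = γ.toFun 0 := by
  rcases γ.len_nonneg.eq_or_lt with hlen | hlen
  · rcases eq_or_ne (γ.toFun γ.len) y with rfl | hne
    · simp [appendJump, ← hlen]
    · simp [appendJump, ← hlen, dist_pos, hlen ▸ hne]
  · simp [appendJump, hlen]

lemma appendJump_toFun_len : (γ.appendJump hy).toFun (γ.appendJump hy).len = y := by
  simp [appendJump, dist_nonneg.not_gt]

lemma energy_appendJump_le (w : Y → ℝ≥0∞) :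
    (γ.appendJump hy).energy w ≤
      γ.energy w + w (γ.toFun γ.len) * ENNReal.ofReal (dist (γ.toFun γ.len) y) := by
  have hsplit : Ico 0 (γ.appendJump hy).len = Ico 0 γ.len ∪ Ico γ.len (γ.appendJump hy).len :=
    (Ico_union_Ico_eq_Ico γ.len_nonneg (le_add_of_nonneg_right dist_nonneg)).symm
  have hold : ∫⁻ t in Ico 0 γ.len, w ((γ.appendJump hy).toFun t) = γ.energy w :=
    setLIntegral_congr_fun measurableSet_Ico fun t ht => by simp [appendJump, ht.2]
  have hwait : ∫⁻ t in Ico γ.len (γ.appendJump hy).len, w ((γ.appendJump hy).toFun t) =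
      ∫⁻ _ in Ico γ.len (γ.appendJump hy).len, w (γ.toFun γ.len) :=
    setLIntegral_congr_fun measurableSet_Ico fun t ht =>
      congrArg w ((if_neg ht.1.not_gt).trans (if_pos ht.2))
  calc (γ.appendJump hy).energy w
      ≤ γ.energy w + ∫⁻ _ in Ico γ.len (γ.appendJump hy).len, w (γ.toFun γ.len) := by
        rw [energy, hsplit, ← hold, ← hwait]
        exact lintegral_union_le _ _ _
    _ = γ.energy w + w (γ.toFun γ.len) * ENNReal.ofReal (dist (γ.toFun γ.len) y) := by
        simp [appendJump]

end AppendJump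

end CoarseCurve

/-- The infimum of the weighted lengths of the `δ`-coarse curves from `K` to `x`. -/
def coarseDist {Y : Type*} [MetricSpace Y] (K : Set Y) (w : Y → ℝ≥0∞) (δ : ℝ≥0) (x : Y) : ℝ≥0∞ :=
  ⨅ (γ : CoarseCurve Y δ) (_ : γ.toFun 0 ∈ K) (_ : γ.toFun γ.len = x), γ.energy w

/-- The distance to `K` in the conformal metric `h ds`, capped by `1` and evaluated at scale `δ`.
It increases to a function with upper gradient `h` as `δ` decreases, and unlike the true
conformal distance it is Lipschitz for every `δ`. -/
def coarsePotential {Y : Type*} [MetricSpace Y] (K : Set Y) (h : Y → ℝ≥0∞) (δ : ℝ≥0) (x : Y) : ℝ :=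
  (min 1 (coarseDist K (lowerEnvelope h δ) δ x)).toReal

section CoarsePotential

variable {Y : Type*} [MetricSpace Y] {K : Set Y} {w h : Y → ℝ≥0∞} {δ η : ℝ≥0} {x y : Y}

lemma coarseDist_eq_zero_of_mem (hx : x ∈ K) : coarseDist K w δ x = 0 :=
  nonpos_iff_eq_zero.1 ((iInf_le _ (.const x)).trans
    (iInf₂_le_of_le hx rfl (CoarseCurve.energy_const x w).le))

lemma coarseDist_le_coarseDist {w' : Y → ℝ≥0∞} (hw : ∀ x, w x ≤ w' x) (hηδ : η ≤ δ) (x : Y) :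
    coarseDist K w δ x ≤ coarseDist K w' η x :=
  le_iInf fun γ => le_iInf₂ fun hK hx =>
    (iInf_le _ (γ.ofLE hηδ)).trans (iInf₂_le_of_le hK hx (γ.energy_mono hw))

lemma coarseDist_le_add (hxy : dist x y ≤ δ) :
    coarseDist K w δ y ≤ coarseDist K w δ x + w x * ENNReal.ofReal (dist x y) := by
  simp only [coarseDist, ENNReal.iInf_add]
  refine le_iInf fun γ => le_iInf₂ fun hK hx => ?_
  subst hx
  exact (iInf_le _ (γ.appendJump hxy)).trans (iInf₂_le_of_le
    ((γ.appendJump_toFun_zero hxy).symm ▸ hK) (γ.appendJump_toFun_len hxy)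
    (γ.energy_appendJump_le hxy w))

lemma coarsePotential_mem_Icc (K : Set Y) (h : Y → ℝ≥0∞) (δ : ℝ≥0) (x : Y) :
    coarsePotential K h δ x ∈ Icc 0 1 :=
  ⟨ENNReal.toReal_nonneg, ENNReal.toReal_le_of_le_ofReal zero_le_one (by simp)⟩

lemma coarsePotential_eq_zero_of_mem (hx : x ∈ K) : coarsePotential K h δ x = 0 := by
  simp [coarsePotential, coarseDist_eq_zero_of_mem hx]

lemma antitone_coarsePotential (K : Set Y) (h : Y → ℝ≥0∞) (x : Y) :
    Antitone fun δ => coarsePotential K h δ x := fun η δ hηδ =>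
  ENNReal.toReal_mono (by simp) (min_le_min_left _
    (coarseDist_le_coarseDist (fun z => antitone_lowerEnvelope h z hηδ) hηδ x))

lemma coarsePotential_le_add (hxy : dist x y ≤ δ) {c : ℝ≥0} (hc : lowerEnvelope h δ x ≤ c) :
    coarsePotential K h δ y ≤ coarsePotential K h δ x + c * dist x y := by
  have hstep : min 1 (coarseDist K (lowerEnvelope h δ) δ y) ≤
      min 1 (coarseDist K (lowerEnvelope h δ) δ x) + c * ENNReal.ofReal (dist x y) := by
    rw [min_add]
    exact min_le_min le_self_add ((coarseDist_le_add hxy).trans (by gcongr))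
  have hne : (c : ℝ≥0∞) * ENNReal.ofReal (dist x y) ≠ ∞ := by finiteness
  have hreal := ENNReal.toReal_mono (ENNReal.add_ne_top.2 ⟨by simp, hne⟩) hstep
  rwa [ENNReal.toReal_add (by simp) hne, ENNReal.toReal_mul, ENNReal.coe_toReal,
    ENNReal.toReal_ofReal dist_nonneg] at hreal

lemma lipschitzWith_coarsePotential (K : Set Y) (h : Y → ℝ≥0∞) (hδ : 0 < δ) :
    LipschitzWith δ⁻¹ (coarsePotential K h δ) := by
  refine LipschitzWith.of_le_add_mul _ fun y x => ?_
  rw [dist_comm]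
  rcases le_total (dist x y) δ with hxy | hxy
  · refine coarsePotential_le_add hxy ((lowerEnvelope_le_inv h δ x).trans_eq ?_)
    rw [ENNReal.coe_inv hδ.ne']
  · have hone : 1 ≤ (δ⁻¹ : ℝ≥0) * dist x y := by
      rwa [NNReal.coe_inv, inv_mul_eq_div, one_le_div (NNReal.coe_pos.2 hδ)]
    linarith [(coarsePotential_mem_Icc K h δ y).2, (coarsePotential_mem_Icc K h δ x).1]

lemma hasSlopeBound_coarsePotential (K : Set Y) (h : Y → ℝ≥0∞) (hδ : 0 < δ) :
    HasSlopeBound (coarsePotential K h δ) (Kᶜ.indicator h) := by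
  intro x
  by_cases hx : x ∈ K
  · refine .inl (.inl (Eventually.of_forall fun y => ?_))
    rw [coarsePotential_eq_zero_of_mem hx]
    exact (coarsePotential_mem_Icc K h δ y).1
  refine .inr ?_
  rw [indicator_of_mem (mem_compl hx)]
  filter_upwards [ball_mem_nhds x (NNReal.coe_pos.2 hδ)] with y hy
  rcases eq_or_ne (h x) ∞ with htop | hfin
  · rcases eq_or_ne y x with rfl | hyx
    · simp
    · rw [htop, ENNReal.top_mul (ENNReal.ofReal_pos.2 (dist_pos.2 hyx)).ne']
      exact le_top
  lift h x to ℝ≥0 using hfin with c hc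
  have habs : |coarsePotential K h δ y - coarsePotential K h δ x| ≤ c * dist y x := by
    rw [abs_sub_le_iff, sub_le_iff_le_add', sub_le_iff_le_add']
    refine ⟨dist_comm x y ▸ coarsePotential_le_add (dist_comm x y ▸ (mem_ball.1 hy).le) ?_,
      coarsePotential_le_add (mem_ball.1 hy).le ?_⟩
    · exact hc ▸ lowerEnvelope_le_of_dist_lt (by simpa using hδ)
    · exact hc ▸ lowerEnvelope_le_of_dist_lt (mem_ball.1 hy)
  calc ENNReal.ofReal |coarsePotential K h δ y - coarsePotential K h δ x|
      ≤ ENNReal.ofReal (c * dist y x) := ENNReal.ofReal_le_ofReal habs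
    _ = c * ENNReal.ofReal (dist y x) := by
        rw [ENNReal.ofReal_mul c.coe_nonneg, ENNReal.ofReal_coe_nnreal]

lemma exists_coarseCurve_of_coarsePotential_lt {a : ℝ} (ha : a ≤ 1)
    (hx : coarsePotential K h δ x < a) :
    ∃ γ : CoarseCurve Y δ, γ.toFun 0 ∈ K ∧ γ.toFun γ.len = x ∧
      γ.energy (lowerEnvelope h δ) ≤ ENNReal.ofReal a := by
  have hmin := (ENNReal.lt_ofReal_iff_toReal_lt (by simp)).2 hx
  rcases min_lt_iff.1 hmin with hone | hdist
  · exact absurd (ENNReal.one_lt_ofReal.1 hone) ha.not_gt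
  · simp only [coarseDist, iInf_lt_iff] at hdist
    obtain ⟨γ, hK, hx, hγ⟩ := hdist
    exact ⟨γ, hK, hx, hγ.le⟩

end CoarsePotential

/-! ### Limits of coarse curves -/

lemma exists_lipschitzWith_one_tendsto {ι Y Z : Type*} [PseudoMetricSpace Z] [PseudoMetricSpace Y]
    [ProperSpace Y] {F : ι → Z → Y} {δ : ι → ℝ} {U : Ultrafilter ι} (hδ : Tendsto δ U (𝓝 0))
    (hF : ∀ i s t, dist (F i s) (F i t) ≤ dist s t + δ i)
    (hbdd : ∀ t, Bornology.IsBounded (range fun i => F i t)) :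
    ∃ G : Z → Y, LipschitzWith 1 G ∧ ∀ t, Tendsto (fun i => F i t) U (𝓝 (G t)) := by
  have hlim : ∀ t, ∃ y, Tendsto (fun i => F i t) U (𝓝 y) := fun t => by
    obtain ⟨y, -, hy⟩ := (hbdd t).isCompact_closure.ultrafilter_le_nhds' (U.map fun i => F i t)
      (Ultrafilter.mem_map.2 (Eventually.of_forall fun i => subset_closure (mem_range_self i)))
    exact ⟨y, hy⟩
  choose G hG using hlim
  refine ⟨G, LipschitzWith.of_dist_le_mul fun s t => ?_, hG⟩
  simpa using le_of_tendsto_of_tendsto' ((hG s).dist (hG t)) (hδ.const_add (dist s t))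
    fun i => hF i s t

lemma tendstoUniformlyOn_of_dist_le_add {ι Y Z : Type*} [PseudoMetricSpace Z]
    [PseudoMetricSpace Y] {F : ι → Z → Y} {G : Z → Y} {δ : ι → ℝ} {l : Filter ι} {S : Set Z}
    (hδ : Tendsto δ l (𝓝 0)) (hF : ∀ i s t, dist (F i s) (F i t) ≤ dist s t + δ i)
    (hG : LipschitzWith 1 G) (hlim : ∀ t, Tendsto (fun i => F i t) l (𝓝 (G t)))
    (hS : IsCompact S) : TendstoUniformlyOn F G l S := by
  refine Metric.tendstoUniformlyOn_iff.2 fun ε hε => ?_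
  obtain ⟨T, -, hTfin, hcover⟩ := finite_cover_balls_of_compact hS (by positivity : 0 < ε / 4)
  have hT : ∀ᶠ i in l, ∀ t ∈ T, dist (F i t) (G t) < ε / 4 :=
    (eventually_all_finite hTfin).2 fun t _ => (hlim t).eventually (ball_mem_nhds _ (by positivity))
  filter_upwards [hT, hδ.eventually_lt_const (by positivity : 0 < ε / 4)] with i hi hδi s hs
  obtain ⟨t, ht, hst⟩ := mem_iUnion₂.1 (hcover hs)
  have hGst := hG.dist_le_mul s t
  rw [NNReal.coe_one, one_mul] at hGst
  have htri := dist_triangle4 (G s) (G t) (F i t) (F i s)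
  rw [dist_comm (G t), dist_comm (F i t) (F i s)] at htri
  linarith [hF i s t, hi t ht, mem_ball.1 hst]

lemma setLIntegral_Ico_le_of_forall_lt {f : ℝ → ℝ≥0∞} {l : ℝ} {a : ℝ≥0∞}
    (h : ∀ b < l, ∫⁻ t in Ico 0 b, f t ≤ a) : ∫⁻ t in Ico 0 l, f t ≤ a := by
  obtain ⟨b, hb, hbl, hlim⟩ := exists_seq_strictMono_tendsto l
  have hIco : Ico 0 l = ⋃ n, Ico 0 (b n) := by
    simp only [← Ici_inter_Iio, ← inter_iUnion,
      (isLUB_of_tendsto_atTop hb.monotone hlim).iUnion_Iio_eq]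
  rw [hIco, setLIntegral_iUnion_of_directed f
    (directed_of_isDirected_le fun i j hij => Ico_subset_Ico_right (hb.monotone hij))]
  exact iSup_le fun n => h _ (hbl n)

section Limit

variable {h : X → ℝ≥0∞} {a : ℝ≥0∞} {G : ℝ → X} {l : ℝ}

lemma setLIntegral_comp_le_of_forall_lowerEnvelope (hh : LowerSemicontinuous h)
    (hG : Continuous G)
    (hle : ∀ n, ∀ b < l, ∫⁻ t in Ico 0 b, lowerEnvelope h (scale n) (G t) ≤ a) :
    ∫⁻ t in Ico 0 l, h (G t) ≤ a :=
  calc ∫⁻ t in Ico 0 l, h (G t)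
      ≤ ∫⁻ t in Ico 0 l, ⨆ n, lowerEnvelope h (scale n) (G t) :=
        lintegral_mono fun _ => le_iSup_lowerEnvelope (hh _)
    _ = ⨆ n, ∫⁻ t in Ico 0 l, lowerEnvelope h (scale n) (G t) :=
        lintegral_iSup (fun _ => (measurable_lowerEnvelope h _).comp hG.measurable)
          fun _ _ hmn _ => antitone_lowerEnvelope h _ (antitone_scale hmn)
    _ ≤ a := iSup_le fun n => setLIntegral_Ico_le_of_forall_lt (hle n)

end Limit

lemma setLIntegral_lowerEnvelope_le_of_tendsto {Y : Type*} [MetricSpace Y] {h : Y → ℝ≥0∞}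
    {a : ℝ≥0∞} {G : ℝ → Y} {δ : ℕ → ℝ≥0} {U : Ultrafilter ℕ} (hδ : Tendsto δ U (𝓝 0))
    {γ : ∀ n, CoarseCurve Y (δ n)} (hγ : ∀ n, (γ n).energy (lowerEnvelope h (δ n)) ≤ a)
    {l : ℝ} (hl : Tendsto (fun n => (γ n).len) U (𝓝 l)) {b : ℝ} (hb : b < l)
    (hunif : TendstoUniformlyOn (fun n => (γ n).toFun) G U (Icc 0 b)) {η : ℝ≥0} (hη : 0 < η) :
    ∫⁻ t in Ico 0 b, lowerEnvelope h η (G t) ≤ a := by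
  have hη2 : 0 < (η : ℝ) / 2 := by positivity
  obtain ⟨n, hn, hδn, hbn⟩ := ((Metric.tendstoUniformlyOn_iff.1 hunif _ hη2).and
    (((NNReal.tendsto_coe.2 hδ).eventually_lt_const hη2).and
      (hl.eventually_const_lt hb))).exists
  calc ∫⁻ t in Ico 0 b, lowerEnvelope h η (G t)
      ≤ ∫⁻ t in Ico 0 b, lowerEnvelope h (δ n) ((γ n).toFun t) :=
        setLIntegral_mono' measurableSet_Ico fun t ht => lowerEnvelope_le_lowerEnvelope
          (by linarith [hn t (Ico_subset_Icc_self ht)])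
    _ ≤ (γ n).energy (lowerEnvelope h (δ n)) := lintegral_mono_set (Ico_subset_Ico_right hbn.le)
    _ ≤ a := hγ n

lemma exists_curve_of_forall_coarsePotential_lt [ProperSpace X] {K : Set X} (hK : IsClosed K)
    {h : X → ℝ≥0∞} (hh : LowerSemicontinuous h) (hone : ∀ x, 1 ≤ h x) {x : X} {a : ℝ}
    (ha : a ≤ 1) (hx : ∀ n, coarsePotential K h (scale n) x < a) :
    ∃ γ : Curve X, γ.toFun 0 ∈ K ∧ γ.toFun γ.len = x ∧ γ.integral h ≤ ENNReal.ofReal a := by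
  have ha0 : 0 ≤ a := (coarsePotential_mem_Icc K h _ x).1.trans (hx 0).le
  choose γ hγK hγx hγ using fun n => exists_coarseCurve_of_coarsePotential_lt ha (hx n)
  have hlen : ∀ n, (γ n).len ∈ Icc 0 a := fun n => ⟨(γ n).len_nonneg,
    (γ n).len_le_of_energy_le (one_le_lowerEnvelope hone (scale_le_one n)) ha0 (hγ n)⟩
  have hscale : Tendsto scale (hyperfilter ℕ) (𝓝 0) :=
    tendsto_scale.mono_left Nat.hyperfilter_le_atTop
  obtain ⟨l, hl, hlim⟩ := (isCompact_Icc (a := (0 : ℝ)) (b := a)).ultrafilter_le_nhds'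
    ((hyperfilter ℕ).map fun n => (γ n).len) (Ultrafilter.mem_map.2 (Eventually.of_forall hlen))
  have hbdd : ∀ t, Bornology.IsBounded (range fun n => (γ n).toFun t) := fun t =>
    (isBounded_closedBall (x := x) (r := |t| + a + 1)).subset <| by
      rintro _ ⟨n, rfl⟩
      have hdist := (γ n).dist_le_dist_add t (γ n).len
      rw [hγx, Real.dist_eq] at hdist
      have habs := abs_sub t (γ n).len
      rw [abs_of_nonneg (hlen n).1] at habs
      exact mem_closedBall.2 (by linarith [(hlen n).2, NNReal.coe_le_one.2 (scale_le_one n)])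
  obtain ⟨G, hG, hGlim⟩ := exists_lipschitzWith_one_tendsto (NNReal.tendsto_coe.2 hscale)
    (fun n => (γ n).dist_le_dist_add) hbdd
  have hGl : G l = x := by
    have hdist : Tendsto (fun n => dist l (γ n).len + scale n) (hyperfilter ℕ) (𝓝 0) := by
      simpa using ((tendsto_const_nhds (x := l)).dist hlim).add (NNReal.tendsto_coe.2 hscale)
    refine tendsto_nhds_unique (hGlim l) (tendsto_iff_dist_tendsto_zero.2 ?_)
    exact squeeze_zero (fun _ => dist_nonneg)
      (fun n => by simpa only [hγx] using (γ n).dist_le_dist_add l (γ n).len) hdist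
  refine ⟨⟨l, hl.1, G, hG.lipschitzOnWith⟩,
    hK.mem_of_tendsto (hGlim 0) (Eventually.of_forall hγK), hGl, ?_⟩
  rw [Curve.integral, ← restrict_Ico_eq_restrict_Icc]
  exact setLIntegral_comp_le_of_forall_lowerEnvelope hh hG.continuous fun n b hb =>
    setLIntegral_lowerEnvelope_le_of_tendsto hscale hγ hlim hb
      (tendstoUniformlyOn_of_dist_le_add (NNReal.tendsto_coe.2 hscale)
        (fun n => (γ n).dist_le_dist_add) hG hGlim isCompact_Icc) (scale_pos n)

/-! ### Doubling measures -/

lemma exists_maximal_isSeparated {Y : Type*} [PseudoEMetricSpace Y] (ε : ℝ≥0∞) (s : Set Y) :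
    ∃ N, Maximal (fun N => N ⊆ s ∧ IsSeparated ε N) N :=
  zorn_subset {N | N ⊆ s ∧ IsSeparated ε N} fun c hcs hc =>
    ⟨⋃₀ c, ⟨sUnion_subset fun _ hN => (hcs hN).1,
      (pairwise_sUnion hc.directedOn).2 fun _ hN => (hcs hN).2⟩, fun _ => subset_sUnion_of_mem⟩

section Doubling

variable {Y : Type*} [MetricSpace Y] [MeasurableSpace Y] {ν : Measure Y} {Cd r : ℝ}

lemma Doubling.one_le (h : Doubling ν Cd) : 1 ≤ Cd := h.1

lemma Doubling.measure_ball_pos (h : Doubling ν Cd) (x : Y) (hr : 0 < r) : 0 < ν (ball x r) := by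
  have := (h.2 x (r / 2) (half_pos hr)).1
  rwa [mul_div_cancel₀ _ two_ne_zero] at this

lemma Doubling.measure_ball_two_mul_le (h : Doubling ν Cd) (x : Y) (hr : 0 < r) :
    ν (ball x (2 * r)) ≤ ENNReal.ofReal Cd * ν (ball x r) :=
  (h.2 x r hr).2.1

lemma Doubling.measure_ball_lt_top (h : Doubling ν Cd) (x : Y) (r : ℝ) : ν (ball x r) < ∞ := by
  rcases le_or_gt r 0 with hr | hr
  · simp [ball_eq_empty.2 hr]
  · exact (h.2 x r hr).2.2

lemma Doubling.measure_ball_two_pow_mul_le (h : Doubling ν Cd) (x : Y) (hr : 0 < r) (k : ℕ) :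
    ν (ball x (2 ^ k * r)) ≤ ENNReal.ofReal (Cd ^ k) * ν (ball x r) := by
  rw [ENNReal.ofReal_pow (zero_le_one.trans h.one_le)]
  induction k with
  | zero => simp
  | succ k ih =>
    rw [pow_succ', mul_assoc, pow_succ', mul_assoc]
    exact (h.measure_ball_two_mul_le x (by positivity)).trans (by gcongr)

lemma Doubling.isLocallyFiniteMeasure (h : Doubling ν Cd) : IsLocallyFiniteMeasure ν :=
  ⟨fun x => ⟨ball x 1, ball_mem_nhds x one_pos, h.measure_ball_lt_top x 1⟩⟩

lemma Doubling.isOpenPosMeasure (h : Doubling ν Cd) : ν.IsOpenPosMeasure := by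
  refine ⟨fun U hU ⟨x, hx⟩ => ?_⟩
  obtain ⟨r, hr, hball⟩ := Metric.isOpen_iff.1 hU x hx
  exact ((h.measure_ball_pos x hr).trans_le (measure_mono hball)).ne'

lemma Doubling.measure_closedBall_le (h : Doubling ν Cd) (x : Y) (hr : 0 < r) :
    ν (closedBall x r) ≤ ENNReal.ofReal Cd * ν (ball x r) :=
  (measure_mono (closedBall_subset_ball (by linarith))).trans (h.measure_ball_two_mul_le x hr)

lemma Doubling.isUnifLocDoublingMeasure (h : Doubling ν Cd) : IsUnifLocDoublingMeasure ν := by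
  refine ⟨⟨(Cd ^ 2).toNNReal, ?_⟩⟩
  filter_upwards [self_mem_nhdsWithin] with r (hr : 0 < r) x
  calc ν (closedBall x (2 * r)) ≤ ν (ball x (2 ^ 2 * r)) :=
        measure_mono (closedBall_subset_ball (by linarith))
    _ ≤ ENNReal.ofReal (Cd ^ 2) * ν (ball x r) := h.measure_ball_two_pow_mul_le x hr 2
    _ ≤ ENNReal.ofReal (Cd ^ 2) * ν (closedBall x r) := by gcongr; exact ball_subset_closedBall

lemma Doubling.exists_pos_le_measure_ball (h : Doubling ν Cd) (x : Y) (R : ℝ) (hr : 0 < r) :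
    ∃ m : ℝ≥0∞, 0 < m ∧ ∀ y ∈ closedBall x R, m ≤ ν (ball y r) := by
  obtain ⟨k, hk⟩ := pow_unbounded_of_one_lt ((R + r) / r) one_lt_two
  have hCd : ENNReal.ofReal (Cd ^ k) ≠ 0 :=
    (ENNReal.ofReal_pos.2 (pow_pos (zero_lt_one.trans_le h.one_le) k)).ne'
  refine ⟨ν (ball x r) / ENNReal.ofReal (Cd ^ k),
    ENNReal.div_pos (h.measure_ball_pos x hr).ne' ENNReal.ofReal_ne_top, fun y hy => ?_⟩
  rw [ENNReal.div_le_iff hCd ENNReal.ofReal_ne_top, mul_comm]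
  refine (measure_mono (ball_subset_ball' ?_)).trans (h.measure_ball_two_pow_mul_le y hr k)
  rw [div_lt_iff₀ hr] at hk
  linarith [mem_closedBall'.1 hy]

variable [BorelSpace Y]

lemma Doubling.finite_of_isSeparated (h : Doubling ν Cd) {ε : ℝ≥0} (hε : 0 < ε) {x : Y} {R : ℝ}
    {N : Set Y} (hN : N ⊆ closedBall x R) (hsep : IsSeparated ε N) : N.Finite := by
  obtain ⟨m, hm, hball⟩ := h.exists_pos_le_measure_ball x R (half_pos (NNReal.coe_pos.2 hε))
  have hdisj : Pairwise (Function.onFun Disjoint fun y : N => ball (y : Y) (ε / 2)) := by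
    intro y z hyz
    have hlt : (ε : ℝ≥0∞) < edist (y : Y) z := hsep y.2 z.2 (Subtype.coe_ne_coe.2 hyz)
    rw [edist_nndist, ENNReal.coe_lt_coe, ← NNReal.coe_lt_coe, coe_nndist] at hlt
    exact ball_disjoint_ball (by linarith)
  have hunion : ν (⋃ y : N, ball (y : Y) (ε / 2)) ≠ ∞ := by
    refine ne_top_of_le_ne_top (h.measure_ball_lt_top x (R + ε)).ne (measure_mono ?_)
    refine iUnion_subset fun y => ball_subset_ball' ?_
    linarith [mem_closedBall.1 (hN y.2), NNReal.coe_pos.2 hε]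
  have hfinite := Measure.finite_const_le_meas_of_disjoint_iUnion ν hm
    (fun _ => measurableSet_ball) hdisj hunion
  exact Set.finite_coe_iff.1 (Set.finite_univ_iff.1 (hfinite.subset fun y _ => hball y (hN y.2)))

lemma Doubling.properSpace [CompleteSpace Y] (h : Doubling ν Cd) : ProperSpace Y := by
  refine ⟨fun x R => TotallyBounded.isCompact_of_isClosed ?_ isClosed_closedBall⟩
  rw [Metric.totallyBounded_iff]
  intro ε hε
  lift ε to ℝ≥0 using hε.le
  have hε' : 0 < ε / 2 := half_pos (NNReal.coe_pos.1 hε)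
  obtain ⟨N, hmax⟩ := exists_maximal_isSeparated (ε / 2 : ℝ≥0) (closedBall x R)
  refine ⟨N, h.finite_of_isSeparated hε' hmax.prop.1 hmax.prop.2, ?_⟩
  refine (isCover_iff_subset_iUnion_closedBall.1 (IsCover.of_maximal_isSeparated hmax)).trans ?_
  gcongr
  exact closedBall_subset_ball (by simpa using hε)

end Doubling

/-! ### Measurability from the Poincaré inequality -/

lemma abs_setAverage_sub_le_mul_setAverage {α : Type*} [MeasurableSpace α] {ν : Measure α}
    {f : α → ℝ} {s t : Set α} {D : ℝ} (hts : t ⊆ s) (ht : ν t ≠ 0) (hs : ν s ≠ ∞) (hD : 0 ≤ D)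
    (hst : ν s ≤ ENNReal.ofReal D * ν t) (hf : IntegrableOn f s ν) (m : ℝ) :
    |(⨍ x in t, f x ∂ν) - m| ≤ D * ⨍ x in s, |f x - m| ∂ν := by
  have ht' : ν t ≠ ∞ := measure_ne_top_of_subset hts hs
  have hfm : IntegrableOn (fun x => |f x - m|) s ν := (hf.sub (integrableOn_const hs)).abs
  have hjensen : |(⨍ x in t, f x ∂ν) - m| ≤ ⨍ x in t, |f x - m| ∂ν :=
    (convexOn_univ_dist m).map_set_average_le (by fun_prop) isClosed_univ ht ht'
      (Eventually.of_forall fun _ => mem_univ _) (hf.mono_set hts) (hfm.mono_set hts)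
  refine hjensen.trans ?_
  have hμt : 0 < ν.real t := ENNReal.toReal_pos ht ht'
  have hμs : 0 < ν.real s := hμt.trans_le (measureReal_mono hts hs)
  have hratio : ν.real s ≤ D * ν.real t := by
    have := ENNReal.toReal_mono (ENNReal.mul_ne_top ENNReal.ofReal_ne_top ht') hst
    rwa [ENNReal.toReal_mul, ENNReal.toReal_ofReal hD] at this
  have hinv : (ν.real t)⁻¹ ≤ D * (ν.real s)⁻¹ := by
    rw [← div_eq_mul_inv, le_div_iff₀ hμs, inv_mul_le_iff₀ hμt, mul_comm]
    exact hratio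
  calc ⨍ x in t, |f x - m| ∂ν = (ν.real t)⁻¹ * ∫ x in t, |f x - m| ∂ν := setAverage_eq _ _ _
    _ ≤ (D * (ν.real s)⁻¹) * ∫ x in s, |f x - m| ∂ν := by
        gcongr
        exact .of_forall fun x => abs_nonneg (f x - m)
    _ = D * ⨍ x in s, |f x - m| ∂ν := by rw [setAverage_eq, smul_eq_mul, mul_assoc]

lemma memL1Loc_of_continuous [IsLocallyFiniteMeasure μ] (hu : Continuous u) :
    MemL1Loc μ univ u := by
  refine ⟨hu.aemeasurable, fun x _ => ?_⟩
  obtain ⟨s, hs, hint⟩ := (hu.locallyIntegrable (μ := μ)) x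
  obtain ⟨r, hr, hball⟩ := Metric.mem_nhds_iff.1 hs
  refine ⟨r, hr, ?_⟩
  simpa only [univ_inter, HasFiniteIntegral, ← ofReal_norm, Real.norm_eq_abs]
    using (hint.mono_set hball).2

lemma tendsto_setAverage_ball {Y : Type*} [MetricSpace Y] [MeasurableSpace Y]
    [OpensMeasurableSpace Y] {ν : Measure Y} [IsLocallyFiniteMeasure ν] [ν.IsOpenPosMeasure]
    {f : Y → ℝ} (hf : LocallyIntegrable f ν) {x : Y} (hx : ContinuousAt f x) :
    Tendsto (fun r => ⨍ y in ball x r, f y ∂ν) (𝓝[>] 0) (𝓝 (f x)) := by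
  refine nhds_basis_closedBall.tendsto_right_iff.2 fun ε hε => ?_
  obtain ⟨s, hs, hint⟩ := hf x
  obtain ⟨t, ht, hfin⟩ := ν.finiteAt_nhds x
  obtain ⟨δ, hδ, hball⟩ := Metric.mem_nhds_iff.1
    (inter_mem (inter_mem hs ht) (hx.eventually (closedBall_mem_nhds (f x) hε)))
  filter_upwards [Ioo_mem_nhdsGT hδ] with r hr
  have hr_sub : ball x r ⊆ s ∩ t ∩ {y | f y ∈ closedBall (f x) ε} :=
    (ball_subset_ball hr.2.le).trans hball
  exact (convex_closedBall (f x) ε).set_average_mem isClosed_closedBall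
    (measure_ball_pos ν x hr.1).ne'
    (measure_ne_top_of_subset (fun y hy => (hr_sub hy).1.2) hfin.ne)
    (ae_restrict_of_forall_mem measurableSet_ball fun y hy => (hr_sub hy).2)
    (hint.mono_set fun y hy => (hr_sub hy).1.1)

/-- The restricted maximal function of `h` at `x` is at most `c`: the averages of `h` over the
balls centred at `x` of radius at most `R` do not exceed `c`. -/
def MaximalBound {Y : Type*} [MetricSpace Y] [MeasurableSpace Y] (ν : Measure Y) (h : Y → ℝ≥0∞)
    (c : ℝ≥0) (R : ℝ) (x : Y) : Prop :=
  ∀ r, 0 < r → r ≤ R → ∫⁻ y in ball x r, h y ∂ν ≤ c * ν (ball x r)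

section Poincare

variable [ProperSpace X] {Cd CP lam : ℝ} {f : X → ℝ} {h : X → ℝ≥0∞} {c : ℝ≥0} {R r s D : ℝ}
  {x y : X}

lemma Poincare.setAverage_abs_sub_le {Y : Type*} [MetricSpace Y] [MeasurableSpace Y]
    {ν : Measure Y} {f : Y → ℝ} {h : Y → ℝ≥0∞} {x : Y} (hP : Poincare ν CP lam)
    (hf : MemL1Loc ν univ f) (hfh : IsUpperGradient f h) (hx : MaximalBound ν h c R x)
    (hr : 0 < r) (hR : lam * r ≤ R) :
    ⨍ y in ball x r, |f y - ⨍ z in ball x r, f z ∂ν| ∂ν ≤ CP * r * c := by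
  have hCP : 0 < CP := zero_lt_one.trans_le hP.1
  have hlam : 0 < lam := zero_lt_one.trans_le hP.2.1
  have hmax : (∫⁻ y in ball x (lam * r), h y ∂ν) / ν (ball x (lam * r)) ≤ c :=
    ENNReal.div_le_of_le_mul (hx _ (by positivity) hR)
  rw [← ENNReal.ofReal_le_ofReal_iff (by positivity), ENNReal.ofReal_mul (by positivity),
    ENNReal.ofReal_coe_nnreal]
  exact (hP.2.2 x r hr f h hf hfh).trans (by gcongr)

lemma Poincare.abs_setAverage_ball_sub_le (hP : Poincare μ CP lam) (hD : Doubling μ Cd)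
    (hf : Continuous f) (hfh : IsUpperGradient f h) (hx : MaximalBound μ h c R x) (hr : 0 < r)
    (hR : lam * r ≤ R) (hs : 0 < s) (hsub : ball y s ⊆ ball x r) (hD0 : 0 ≤ D)
    (hμ : μ (ball x r) ≤ ENNReal.ofReal D * μ (ball y s)) :
    |(⨍ z in ball y s, f z ∂μ) - ⨍ z in ball x r, f z ∂μ| ≤ D * (CP * r * c) := by
  have := hD.isLocallyFiniteMeasure
  have hint : IntegrableOn f (ball x r) μ :=
    (hf.continuousOn.integrableOn_compact (isCompact_closedBall x r)).mono_set
      ball_subset_closedBall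
  calc |(⨍ z in ball y s, f z ∂μ) - ⨍ z in ball x r, f z ∂μ|
      ≤ D * ⨍ w in ball x r, |f w - ⨍ z in ball x r, f z ∂μ| ∂μ :=
        abs_setAverage_sub_le_mul_setAverage hsub (hD.measure_ball_pos y hs).ne'
          (hD.measure_ball_lt_top x r).ne hD0 hμ hint _
    _ ≤ D * (CP * r * c) := by
        gcongr
        exact hP.setAverage_abs_sub_le (memL1Loc_of_continuous hf) hfh hx hr hR

lemma Poincare.abs_setAverage_ball_sub_self_le (hP : Poincare μ CP lam) (hD : Doubling μ Cd)
    (hf : Continuous f) (hfh : IsUpperGradient f h) (hx : MaximalBound μ h c R x) (hr : 0 < r)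
    (hR : lam * r ≤ R) :
    |(⨍ z in ball x r, f z ∂μ) - f x| ≤ 2 * (Cd * (CP * r * c)) := by
  have := hD.isLocallyFiniteMeasure
  have := hD.isOpenPosMeasure
  have hlam : 0 < lam := zero_lt_one.trans_le hP.2.1
  have hrk : ∀ k : ℕ, 0 < r / 2 ^ k := fun k => by positivity
  have hstep : ∀ k : ℕ, dist (⨍ z in ball x (r / 2 ^ k), f z ∂μ)
      (⨍ z in ball x (r / 2 ^ (k + 1)), f z ∂μ) ≤ 2 * (Cd * (CP * r * c)) / 2 / 2 ^ k := by
    intro k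
    have hhalf : r / 2 ^ k = 2 * (r / 2 ^ (k + 1)) := by rw [pow_succ]; field_simp
    rw [dist_comm, Real.dist_eq]
    refine (hP.abs_setAverage_ball_sub_le hD hf hfh hx (hrk k) ?_ (hrk (k + 1)) ?_
      (zero_le_one.trans hD.one_le) ?_).trans_eq (by field_simp)
    · exact le_trans (by gcongr; exact div_le_self hr.le (one_le_pow₀ one_le_two)) hR
    · exact ball_subset_ball (by linarith [hrk (k + 1)])
    · rw [hhalf]
      exact hD.measure_ball_two_mul_le x (hrk (k + 1))
  have hlim : Tendsto (fun k : ℕ => r / 2 ^ k) atTop (𝓝[>] 0) :=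
    tendsto_nhdsWithin_iff.2 ⟨tendsto_const_nhds.div_atTop
      (tendsto_pow_atTop_atTop_of_one_lt one_lt_two), .of_forall hrk⟩
  have htele := dist_le_of_le_geometric_two_of_tendsto₀ hstep
    ((tendsto_setAverage_ball hf.locallyIntegrable hf.continuousAt).comp hlim)
  simpa [Real.dist_eq] using htele

lemma Poincare.abs_sub_le_of_continuous (hP : Poincare μ CP lam) (hD : Doubling μ Cd)
    (hf : Continuous f) (hfh : IsUpperGradient f h) (hx : MaximalBound μ h c R x)
    (hy : MaximalBound μ h c R y) (hR : lam * (2 * dist x y) ≤ R) :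
    |f x - f y| ≤ 8 * Cd ^ 2 * CP * c * dist x y := by
  rcases eq_or_ne x y with rfl | hxy
  · simp
  have hd : 0 < dist x y := dist_pos.2 hxy
  have hlam : 0 < lam := zero_lt_one.trans_le hP.2.1
  have hCd : 1 ≤ Cd := hD.one_le
  have hCP : 0 ≤ CP := zero_le_one.trans hP.1
  have hxavg := hP.abs_setAverage_ball_sub_self_le hD hf hfh hx (r := 2 * dist x y)
    (by positivity) hR
  have hyavg := hP.abs_setAverage_ball_sub_self_le hD hf hfh hy hd (by nlinarith)
  have havg := hP.abs_setAverage_ball_sub_le hD hf hfh hx (by positivity) hR hd (y := y)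
    (ball_subset_ball' (by rw [dist_comm]; linarith)) (sq_nonneg Cd)
    ((measure_mono (ball_subset_ball' (by linarith))).trans
      (hD.measure_ball_two_pow_mul_le y hd 2))
  have hCd2 : Cd * (CP * dist x y * c) ≤ Cd ^ 2 * (CP * dist x y * c) := by
    gcongr
    exact le_self_pow₀ hCd two_ne_zero
  rw [abs_le] at hxavg hyavg havg ⊢
  constructor <;> linarith

lemma Poincare.abs_sub_le_of_lowerSemicontinuous (hP : Poincare μ CP lam) (hD : Doubling μ Cd)
    (hh : LowerSemicontinuous h) (hone : ∀ x, 1 ≤ h x) (huh : IsUpperGradient u h)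
    (hx : MaximalBound μ h c R x) (hy : MaximalBound μ h c R y)
    (hR : lam * (2 * dist x y) ≤ R) (hlt : 8 * Cd ^ 2 * CP * c * dist x y < 1) :
    |u x - u y| ≤ 8 * Cd ^ 2 * CP * c * dist x y := by
  refine le_of_forall_gt_imp_ge_of_dense fun b hb => ?_
  have hpot : ∀ n, coarsePotential {x} h (scale n) y < min b 1 := by
    intro n
    have hlip := lipschitzWith_coarsePotential {x} h (scale_pos n)
    have hug : IsUpperGradient (coarsePotential {x} h (scale n)) h :=
      ((hasSlopeBound_coarsePotential {x} h (scale_pos n)).isUpperGradient hlip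
        (hh.measurable.indicator isClosed_singleton.measurableSet.compl)).mono hh.measurable
        (indicator_le_self _ _)
    have hbound := hP.abs_sub_le_of_continuous hD hlip.continuous hug hx hy hR
    rw [coarsePotential_eq_zero_of_mem (mem_singleton x), zero_sub, abs_neg] at hbound
    exact ((le_abs_self _).trans hbound).trans_lt (lt_min hb hlt)
  obtain ⟨γ, hγ0, hγ1, hγ⟩ := exists_curve_of_forall_coarsePotential_lt isClosed_singleton hh hone
    (min_le_right b 1) hpot
  have hbound := (huh.2 γ).trans hγ
  rw [mem_singleton_iff.1 hγ0, hγ1] at hbound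
  have hb1 : 0 ≤ min b 1 := (coarsePotential_mem_Icc {x} h (scale 0) y).1.trans (hpot 0).le
  exact ((ENNReal.ofReal_le_ofReal_iff hb1).1 hbound).trans (min_le_left b 1)

lemma Poincare.continuousOn_of_maximalBound (hP : Poincare μ CP lam) (hD : Doubling μ Cd)
    (hh : LowerSemicontinuous h) (hone : ∀ x, 1 ≤ h x) (huh : IsUpperGradient u h) (hR : 0 < R)
    {S : Set X} (hS : ∀ x ∈ S, MaximalBound μ h c R x) : ContinuousOn u S := by
  intro x hx
  have hdist : Tendsto (fun y => dist y x) (𝓝[S] x) (𝓝 0) :=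
    tendsto_iff_dist_tendsto_zero.1 (tendsto_id.mono_left nhdsWithin_le_nhds)
  have hlip : Tendsto (fun y => 8 * Cd ^ 2 * CP * c * dist y x) (𝓝[S] x) (𝓝 0) := by
    simpa using hdist.const_mul (8 * Cd ^ 2 * CP * c)
  have hradius : Tendsto (fun y => lam * (2 * dist y x)) (𝓝[S] x) (𝓝 0) := by
    simpa using (hdist.const_mul 2).const_mul lam
  refine tendsto_iff_dist_tendsto_zero.2 (squeeze_zero' (.of_forall fun _ => dist_nonneg) ?_ hlip)
  filter_upwards [hradius.eventually_le_const hR, hlip.eventually_lt_const one_pos,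
    self_mem_nhdsWithin] with y hyR hy1 hyS
  exact hP.abs_sub_le_of_lowerSemicontinuous hD hh hone huh (hS y hyS) (hS x hx) hyR hy1

end Poincare

lemma Doubling.maximalBound_of_mem_closure {Y : Type*} [MetricSpace Y] [MeasurableSpace Y]
    {ν : Measure Y} {Cd : ℝ} (hD : Doubling ν Cd) {h : Y → ℝ≥0∞} {c : ℝ≥0} {R : ℝ} {x : Y}
    (hx : x ∈ closure {y | MaximalBound ν h c R y}) :
    MaximalBound ν h (c * (Cd ^ 2).toNNReal) (R / 2) x := by
  intro r hr hrR
  obtain ⟨y, hy, hxy⟩ := Metric.mem_closure_iff.1 hx r hr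
  calc ∫⁻ z in ball x r, h z ∂ν ≤ ∫⁻ z in ball y (2 * r), h z ∂ν :=
        lintegral_mono_set (ball_subset_ball' (by linarith))
    _ ≤ c * ν (ball y (2 * r)) := hy _ (by positivity) (by linarith)
    _ ≤ c * ν (ball x (2 ^ 2 * r)) := by
        gcongr
        exact ball_subset_ball' (by rw [dist_comm]; linarith)
    _ ≤ c * (ENNReal.ofReal (Cd ^ 2) * ν (ball x r)) := by
        gcongr
        exact hD.measure_ball_two_pow_mul_le x hr 2
    _ = (c * (Cd ^ 2).toNNReal : ℝ≥0) * ν (ball x r) := by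
        rw [ENNReal.coe_mul, mul_assoc, ENNReal.ofReal]

lemma MaximalBound.one_add {Y : Type*} [MetricSpace Y] [MeasurableSpace Y] {ν : Measure Y}
    {h : Y → ℝ≥0∞} {c : ℝ≥0} {R : ℝ} {x : Y} (hx : MaximalBound ν h c R x) :
    MaximalBound ν (fun y => 1 + h y) (1 + c) R x := by
  intro r hr hrR
  rw [lintegral_add_left measurable_const, setLIntegral_const, one_mul, ENNReal.coe_add,
    ENNReal.coe_one, add_mul, one_mul]
  gcongr
  exact hx r hr hrR

lemma Doubling.ae_exists_maximalBound [SecondCountableTopology X] {Cd : ℝ} (hD : Doubling μ Cd)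
    (hg : AEMeasurable g μ) (hint : ∫⁻ x, g x ∂μ ≠ ∞) :
    ∀ᵐ x ∂μ, ∃ n : ℕ, MaximalBound μ g n (scale n) x := by
  have := hD.isLocallyFiniteMeasure
  have := hD.isOpenPosMeasure
  have := hD.isUnifLocDoublingMeasure
  filter_upwards [(IsUnifLocDoublingMeasure.vitaliFamily μ 1).ae_tendsto_lintegral_div hg hint,
    ae_lt_top' hg hint] with x hlim hx
  have hball := IsUnifLocDoublingMeasure.tendsto_closedBall_filterAt μ (K := 1) (x := x)
    (l := 𝓝[>] 0) (fun _ => x) id tendsto_id (by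
      filter_upwards [self_mem_nhdsWithin] with r (hr : 0 < r)
      exact mem_closedBall_self (by simpa using hr.le))
  obtain ⟨M, hM⟩ := ENNReal.exists_nat_gt hx.ne
  obtain ⟨δ, hδ, hsmall⟩ :=
    mem_nhdsGT_iff_exists_Ioo_subset.1 ((hlim.comp hball).eventually_lt_const hM)
  have hscale := (NNReal.tendsto_coe.2 tendsto_scale).eventually_lt_const hδ
  obtain ⟨N, hN⟩ := exists_nat_ge (M * Cd)
  obtain ⟨n, hnδ, hnN⟩ := (hscale.and (eventually_ge_atTop N)).exists
  refine ⟨n, fun r hr hrn => ?_⟩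
  have havg : (∫⁻ y in closedBall x r, g y ∂μ) / μ (closedBall x r) ≤ M :=
    (hsmall ⟨hr, hrn.trans_lt hnδ⟩ : _ < _).le
  have hpos : μ (closedBall x r) ≠ 0 := (measure_closedBall_pos μ x hr).ne'
  have hfin : μ (closedBall x r) ≠ ∞ := ne_top_of_le_ne_top
    (ENNReal.mul_ne_top ENNReal.ofReal_ne_top (hD.measure_ball_lt_top x r).ne)
    (hD.measure_closedBall_le x hr)
  calc ∫⁻ y in ball x r, g y ∂μ ≤ ∫⁻ y in closedBall x r, g y ∂μ :=
        lintegral_mono_set ball_subset_closedBall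
    _ ≤ M * μ (closedBall x r) := (ENNReal.div_le_iff hpos hfin).1 havg
    _ ≤ M * (ENNReal.ofReal Cd * μ (ball x r)) := by
        gcongr
        exact hD.measure_closedBall_le x hr
    _ = ENNReal.ofReal (M * Cd) * μ (ball x r) := by
        rw [ENNReal.ofReal_mul M.cast_nonneg, ENNReal.ofReal_natCast, mul_assoc]
    _ ≤ (n : ℝ≥0) * μ (ball x r) := by
        gcongr
        exact ENNReal.ofReal_le_of_le_toReal (hN.trans (by simpa using hnN))

lemma Poincare.aemeasurable_of_isUpperGradient [ProperSpace X] {Cd CP lam : ℝ}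
    (hP : Poincare μ CP lam) (hD : Doubling μ Cd) (hg : LowerSemicontinuous g)
    (hint : ∫⁻ x, g x ∂μ ≠ ∞) (hug : IsUpperGradient u g) : AEMeasurable u μ := by
  have hh : LowerSemicontinuous fun x => 1 + g x := lowerSemicontinuous_const.add hg
  have huh : IsUpperGradient u fun x => 1 + g x :=
    hug.mono hh.measurable fun _ => le_add_self
  let A : ℕ → Set X := fun n =>
    closure {x | MaximalBound μ (fun x => 1 + g x) (1 + n) (scale n) x}
  have hcont : ∀ n, ContinuousOn u (A n) := fun n =>
    hP.continuousOn_of_maximalBound hD hh (fun _ => le_self_add) huh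
      (half_pos (NNReal.coe_pos.2 (scale_pos n))) fun x hx => hD.maximalBound_of_mem_closure hx
  have hae : ∀ᵐ x ∂μ, x ∈ ⋃ n, A n := by
    filter_upwards [hD.ae_exists_maximalBound hg.measurable.aemeasurable hint] with x ⟨n, hn⟩
    exact mem_iUnion.2 ⟨n, subset_closure hn.one_add⟩
  rw [← Measure.restrict_eq_self_of_ae_mem hae, aemeasurable_iUnion_iff]
  exact fun n => (hcont n).aemeasurable isClosed_closure.measurableSet

/-! ### Covering sets of small capacity -/

lemma exists_measurable_ge_lintegral_eq {α : Type*} [MeasurableSpace α] {μ : Measure α}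
    {g : α → ℝ≥0∞} (hg : AEMeasurable g μ) :
    ∃ g' : α → ℝ≥0∞, Measurable g' ∧ g ≤ g' ∧ ∫⁻ x, g' x ∂μ = ∫⁻ x, g x ∂μ := by
  set N := toMeasurable μ {x | g x ≠ hg.mk g x} with hN
  have hN_null : μ N = 0 := by
    rw [hN, measure_toMeasurable]
    exact hg.ae_eq_mk
  have hN_meas : MeasurableSet N := measurableSet_toMeasurable _ _
  refine ⟨fun x => hg.mk g x + N.indicator (fun _ => ∞) x,
    hg.measurable_mk.add (measurable_const.indicator hN_meas), fun x => ?_, ?_⟩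
  · by_cases hx : x ∈ N
    · simp [hx]
    · have hgx : g x = hg.mk g x := not_not.1 fun h => hx (subset_toMeasurable _ _ h)
      simp [hx, ← hgx]
  · rw [lintegral_add_left hg.measurable_mk, lintegral_indicator_const hN_meas, hN_null, mul_zero,
      add_zero, lintegral_congr_ae hg.ae_eq_mk]

lemma IsWeakUpperGradientOn.exists_isUpperGradient_lowerSemicontinuous [μ.WeaklyRegular]
    (h : IsWeakUpperGradientOn μ u g univ) {ε : ℝ≥0∞} (hε : ε ≠ 0) :
    ∃ g' : X → ℝ≥0∞, LowerSemicontinuous g' ∧ IsUpperGradient u g' ∧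
      ∫⁻ x, g' x ∂μ ≤ ∫⁻ x, g x ∂μ + ε := by
  obtain ⟨hg, ρ, hρ, hint, htop⟩ := h
  have hε2 : ε / 2 ≠ 0 := (ENNReal.half_pos hε).ne'
  obtain ⟨c, hc_pos, hc⟩ := ENNReal.exists_nnreal_pos_mul_lt hint.ne hε2
  obtain ⟨g₁, hg₁, hgg₁, hg₁_int⟩ := exists_measurable_ge_lintegral_eq hg
  obtain ⟨g₂, hle, hlsc, hg₂_int⟩ := exists_le_lowerSemicontinuous_lintegral_ge μ
    (fun x => g₁ x + c * ρ x) (hg₁.add (hρ.const_mul _)) hε2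
  refine ⟨g₂, hlsc, ⟨hlsc.measurable, fun γ => ?_⟩, ?_⟩
  · by_cases hγ : UGIneq u g γ
    · exact hγ.mono fun x => (hgg₁ x).trans (le_self_add.trans (hle x))
    · have hinf : γ.integral (fun x => c * ρ x) = ∞ := by
        rw [γ.integral_const_mul hρ, htop γ ⟨fun _ _ => mem_univ _, hγ⟩,
          ENNReal.mul_top (ENNReal.coe_ne_zero.2 hc_pos.ne')]
      have hle' : γ.integral (fun x => c * ρ x) ≤ γ.integral g₂ :=
        lintegral_mono fun _ => le_add_self.trans (hle _)
      rw [UGIneq, top_unique (hinf.ge.trans hle')]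
      exact le_top
  · calc ∫⁻ x, g₂ x ∂μ ≤ ∫⁻ x, g₁ x + c * ρ x ∂μ + ε / 2 := hg₂_int
      _ = ∫⁻ x, g x ∂μ + c * ∫⁻ x, ρ x ∂μ + ε / 2 := by
        rw [lintegral_add_left hg₁, lintegral_const_mul _ hρ, hg₁_int]
      _ ≤ ∫⁻ x, g x ∂μ + ε / 2 + ε / 2 := by gcongr
      _ = ∫⁻ x, g x ∂μ + ε := by rw [add_assoc, ENNReal.add_halves]

lemma exists_isUpperGradient_of_capa1_lt [μ.WeaklyRegular] {G : Set X} {B : ℝ≥0∞}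
    (hB : capa1 μ G < B) :
    ∃ (u : X → ℝ) (g : X → ℝ≥0∞), LowerSemicontinuous g ∧ IsUpperGradient u g ∧
      (∀ x ∈ G, 1 ≤ u x) ∧ ∫⁻ x, ENNReal.ofReal |u x| ∂μ + ∫⁻ x, g x ∂μ < B := by
  simp only [capa1, NNorm, Measure.restrict_univ, ENNReal.add_iInf, iInf_lt_iff] at hB
  obtain ⟨u, -, hu, g, hg, hlt⟩ := hB
  obtain ⟨ε, hε, hlt'⟩ := ENNReal.lt_iff_exists_add_pos_lt.1 hlt
  obtain ⟨g', hlsc, hg', hle⟩ :=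
    hg.exists_isUpperGradient_lowerSemicontinuous (ENNReal.coe_ne_zero.2 hε.ne')
  refine ⟨u, g', hlsc, hg', hu, lt_of_le_of_lt ?_ hlt'⟩
  rw [add_assoc]
  gcongr

lemma exists_isOpen_measure_le_forall_notMem_lt {α : Type*} [TopologicalSpace α]
    [MeasurableSpace α] {μ : Measure α} [μ.OuterRegular] {u : α → ℝ} (hu : AEMeasurable u μ)
    {a : ℝ} (ha : 0 < a) {ε : ℝ≥0∞} (hε : ε ≠ 0) :
    ∃ U : Set α, IsOpen U ∧
      μ U ≤ (∫⁻ x, ENNReal.ofReal |u x| ∂μ) / ENNReal.ofReal a + ε ∧ ∀ x ∉ U, u x < a := by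
  obtain ⟨U, hsub, hU, hμU⟩ :=
    {x | ENNReal.ofReal a ≤ ENNReal.ofReal |u x|}.exists_isOpen_le_add μ hε
  refine ⟨U, hU, hμU.trans ?_, fun x hx => ?_⟩
  · gcongr
    exact meas_ge_le_lintegral_div (measurable_norm.comp_aemeasurable hu).ennreal_ofReal
      (ENNReal.ofReal_pos.2 ha).ne' ENNReal.ofReal_ne_top
  · have hlt : ENNReal.ofReal |u x| < ENNReal.ofReal a := not_le.1 fun hle => hx (hsub hle)
    exact (le_abs_self _).trans_lt ((ENNReal.ofReal_lt_ofReal_iff_of_nonneg (abs_nonneg _)).1 hlt)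

section Superlevel

variable {K G U : Set X} {h : X → ℝ≥0∞}

lemma isUpperGradient_iSup_coarsePotential (hK : IsClosed K) (hh : Measurable h) :
    IsUpperGradient (fun x => ⨆ n, coarsePotential K h (scale n) x) (Kᶜ.indicator h) :=
  isUpperGradient_of_tendsto
    (fun n => (hasSlopeBound_coarsePotential K h (scale_pos n)).isUpperGradient
      (lipschitzWith_coarsePotential K h (scale_pos n)) (hh.indicator hK.measurableSet.compl))
    fun x => tendsto_atTop_ciSup ((antitone_coarsePotential K h x).comp antitone_scale)
      ⟨1, forall_mem_range.2 fun _ => (coarsePotential_mem_Icc K h _ x).2⟩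

lemma ofReal_abs_iSup_coarsePotential_le {Y : Type*} [MetricSpace Y] {h : Y → ℝ≥0∞}
    (hone : ∀ x, 1 ≤ h x) (K : Set Y) (x : Y) :
    ENNReal.ofReal |⨆ n, coarsePotential K h (scale n) x| ≤ Kᶜ.indicator h x := by
  by_cases hx : x ∈ K
  · simp [coarsePotential_eq_zero_of_mem hx]
  · have hmem := fun n => coarsePotential_mem_Icc K h (scale n) x
    rw [indicator_of_mem hx, abs_of_nonneg (Real.iSup_nonneg fun n => (hmem n).1)]
    exact (ENNReal.ofReal_le_one.2 (ciSup_le fun n => (hmem n).2)).trans (hone x)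

lemma capa1_superlevel_coarsePotential_le (hK : IsClosed K) (hh : Measurable h)
    (hone : ∀ x, 1 ≤ h x) {t : ℝ} (ht : 0 < t) :
    capa1 μ {x | ∃ n, t < coarsePotential K h (scale n) x} ≤
      ENNReal.ofReal t⁻¹ * (2 * ∫⁻ x in Kᶜ, h x ∂μ) := by
  refine (capa1_le_of_isUpperGradient (isUpperGradient_iSup_coarsePotential hK hh) ht ?_).trans ?_
  · rintro x ⟨n, hn⟩
    exact hn.le.trans (le_ciSup (f := fun n => coarsePotential K h (scale n) x)
      ⟨1, forall_mem_range.2 fun _ => (coarsePotential_mem_Icc K h _ x).2⟩ n)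
  · rw [two_mul, ← lintegral_indicator hK.measurableSet.compl]
    gcongr with x
    exact ofReal_abs_iSup_coarsePotential_le hone K x

lemma IsUpperGradient.subset_superlevel_coarsePotential [ProperSpace X] (hK : IsClosed K)
    (hlsc : LowerSemicontinuous h) (hone : ∀ x, 1 ≤ h x) (hug : IsUpperGradient u h) {a t : ℝ}
    (hta : t < a) (ha : a ≤ 1) (hG : ∀ x ∈ K, ∀ y ∈ G, a < |u x - u y|) :
    G ⊆ {x | ∃ n, t < coarsePotential K h (scale n) x} := by
  intro y hy
  by_contra hlow
  simp only [mem_ofPred_eq, not_exists, not_lt] at hlow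
  obtain ⟨γ, hstart, hend, hle⟩ := exists_curve_of_forall_coarsePotential_lt hK hlsc hone ha
    fun n => (hlow n).trans_lt hta
  have ha_pos : 0 < a := (coarsePotential_mem_Icc K h _ y).1.trans_lt ((hlow 0).trans_lt hta)
  have hosc : ENNReal.ofReal |u (γ.toFun 0) - u y| ≤ ENNReal.ofReal a :=
    hend ▸ (hug.2 γ).trans hle
  exact (hG _ hstart y hy).not_ge ((ENNReal.ofReal_le_ofReal_iff ha_pos.le).1 hosc)

lemma IsUpperGradient.exists_isOpen_superset [ProperSpace X] [IsLocallyFiniteMeasure μ]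
    (hU : IsOpen U) (hlsc : LowerSemicontinuous h) (hone : ∀ x, 1 ≤ h x)
    (hug : IsUpperGradient u h) (hint : ∫⁻ x in U, h x ∂μ < ∞)
    (hG : ∀ x ∉ U, ∀ y ∈ G, 1 / 2 < |u x - u y|) :
    ∃ V : Set X, IsOpen V ∧ G ⊆ V ∧ capa1 μ V ≤ 8 * ∫⁻ x in U, h x ∂μ ∧
      perimOpen μ V univ ≤ 4 * ∫⁻ x in U, h x ∂μ := by
  have hK : IsClosed Uᶜ := hU.isClosed_compl
  have hlip := fun n => lipschitzWith_coarsePotential Uᶜ h (scale_pos n)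
  have hind : ∫⁻ x, Uᶜᶜ.indicator h x ∂μ = ∫⁻ x in U, h x ∂μ := by
    rw [compl_compl, lintegral_indicator hU.measurableSet]
  obtain ⟨t, ⟨ht, ht'⟩, hperim⟩ := exists_perimOpen_superlevel_le hlip
    (fun x => (antitone_coarsePotential Uᶜ h x).comp antitone_scale)
    (hlsc.measurable.indicator hK.measurableSet.compl)
    (fun n => hasSlopeBound_coarsePotential Uᶜ h (scale_pos n)) (hind.trans_lt hint)
    (show (1 / 4 : ℝ) < 1 / 2 by norm_num)
  refine ⟨{x | ∃ n, t < coarsePotential Uᶜ h (scale n) x}, ?_,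
    hug.subset_superlevel_coarsePotential hK hlsc hone ht' (by norm_num) hG, ?_, ?_⟩
  · rw [ofPred_exists]
    exact isOpen_iUnion fun n => isOpen_lt continuous_const (hlip n).continuous
  · have ht_inv : ENNReal.ofReal t⁻¹ ≤ 4 :=
      ENNReal.ofReal_le_of_le_toReal (by simpa using inv_anti₀ (by norm_num) ht.le)
    calc capa1 μ {x | ∃ n, t < coarsePotential Uᶜ h (scale n) x}
        ≤ ENNReal.ofReal t⁻¹ * (2 * ∫⁻ x in Uᶜᶜ, h x ∂μ) :=
          capa1_superlevel_coarsePotential_le hK hlsc.measurable hone (by linarith)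
      _ ≤ 4 * (2 * ∫⁻ x in U, h x ∂μ) := by rw [compl_compl]; gcongr
      _ = 8 * ∫⁻ x in U, h x ∂μ := by ring
  · refine hperim.trans_eq ?_
    rw [hind, div_eq_mul_inv, mul_comm, ← ENNReal.ofReal_inv_of_pos (by norm_num)]
    norm_num

end Superlevel

lemma Poincare.exists_isOpen_setLIntegral_one_add_le [ProperSpace X] {Cd CP lam : ℝ}
    (hP : Poincare μ CP lam) (hD : Doubling μ Cd) (hlsc : LowerSemicontinuous g)
    (hint : ∫⁻ x, g x ∂μ ≠ ∞) (hug : IsUpperGradient u g) {ε : ℝ≥0∞} (hε : ε ≠ 0) :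
    ∃ U : Set X, IsOpen U ∧ (∀ x ∉ U, u x < 1 / 2) ∧
      ∫⁻ x in U, 1 + g x ∂μ ≤ 2 * ∫⁻ x, ENNReal.ofReal |u x| ∂μ + ε + ∫⁻ x, g x ∂μ := by
  have := hD.isLocallyFiniteMeasure
  obtain ⟨U, hU, hμU, huU⟩ := exists_isOpen_measure_le_forall_notMem_lt
    (hP.aemeasurable_of_isUpperGradient hD hlsc hint hug) one_half_pos hε
  have hdiv : ∀ a : ℝ≥0∞, a / ENNReal.ofReal (1 / 2) = 2 * a := fun a => by
    rw [div_eq_mul_inv, mul_comm, ← ENNReal.ofReal_inv_of_pos one_half_pos]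
    norm_num
  refine ⟨U, hU, huU, ?_⟩
  rw [lintegral_add_left measurable_const, setLIntegral_one, ← hdiv]
  exact add_le_add hμU (setLIntegral_le_lintegral _ _)

theorem exists_open_cover_of_finite_perimeter_general [CompleteSpace X] {Cd CP lam : ℝ}
    (hD : Doubling μ Cd) (hP : Poincare μ CP lam) (G : Set X) {ε : ℝ≥0∞} (hε : ε ≠ 0) :
    ∃ V : Set X, IsOpen V ∧ G ⊆ V ∧ capa1 μ V ≤ 24 * (capa1 μ G + ε) ∧
      perimOpen μ V univ ≤ 24 * (capa1 μ G + ε) := by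
  obtain hfin | htop := ne_or_eq (capa1 μ G + ε) ∞
  swap
  · exact ⟨univ, isOpen_univ, subset_univ G, by simp [htop], by simp [htop]⟩
  have := hD.properSpace
  have := hD.isLocallyFiniteMeasure
  obtain ⟨u, g, hlsc, hug, hG, hlt⟩ := exists_isUpperGradient_of_capa1_lt
    (ENNReal.lt_add_right (ENNReal.add_ne_top.1 hfin).1 hε)
  obtain ⟨U, hU, huU, hle⟩ := hP.exists_isOpen_setLIntegral_one_add_le hD hlsc
    (le_add_self.trans_lt hlt).ne_top hug hε
  have hint : ∫⁻ x in U, 1 + g x ∂μ ≤ 3 * (capa1 μ G + ε) := by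
    calc ∫⁻ x in U, 1 + g x ∂μ
        ≤ 2 * ∫⁻ x, ENNReal.ofReal |u x| ∂μ + ε + ∫⁻ x, g x ∂μ := hle
      _ = ∫⁻ x, ENNReal.ofReal |u x| ∂μ + (∫⁻ x, ENNReal.ofReal |u x| ∂μ + ∫⁻ x, g x ∂μ) + ε := by
          ring
      _ ≤ (capa1 μ G + ε) + (capa1 μ G + ε) + (capa1 μ G + ε) :=
          add_le_add (add_le_add (le_self_add.trans hlt.le) hlt.le) le_add_self
      _ = 3 * (capa1 μ G + ε) := by ring
  have hug' : IsUpperGradient u fun x => 1 + g x :=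
    hug.mono (measurable_const.add hug.1) fun _ => le_add_self
  have hjump : ∀ x ∉ U, ∀ y ∈ G, 1 / 2 < |u x - u y| := fun x hx y hy =>
    lt_abs.2 (.inr (by linarith [huU x hx, hG y hy]))
  obtain ⟨V, hV, hGV, hcapa, hperim⟩ := hug'.exists_isOpen_superset hU
    (lowerSemicontinuous_const.add hlsc) (fun _ => le_self_add)
    (hint.trans_lt (ENNReal.mul_lt_top (by simp) hfin.lt_top)) hjump
  have hbound : 8 * ∫⁻ x in U, 1 + g x ∂μ ≤ 24 * (capa1 μ G + ε) := by
    calc 8 * ∫⁻ x in U, 1 + g x ∂μ ≤ 8 * (3 * (capa1 μ G + ε)) := by gcongr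
      _ = 24 * (capa1 μ G + ε) := by ring
  refine ⟨V, hV, hGV, hcapa.trans hbound, hperim.trans (le_trans ?_ hbound)⟩
  gcongr
  norm_num

/-- There is a constant `C₁ = C₁(C_d, C_P, λ) ≥ 1` such that for any
`G ⊆ X` and `ε > 0` there is an open `V ⊇ G` with `capa₁(V) ≤ C₁(capa₁(G) + ε)` and
`P(V, X) ≤ C₁(capa₁(G) + ε)`. -/
theorem exists_open_cover_of_finite_perimeter (Cd CP lam : ℝ) :
    ∃ C1 : ℝ, 1 ≤ C1 ∧
      ∀ (Y : Type) [MetricSpace Y] [MeasurableSpace Y] [BorelSpace Y] (ν : Measure Y),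
        CompleteSpace Y → Doubling ν Cd → Poincare ν CP lam →
        ∀ (G : Set Y) (ε : ℝ), 0 < ε →
          ∃ V : Set Y, IsOpen V ∧ G ⊆ V ∧
            capa1 ν V ≤ ENNReal.ofReal C1 * (capa1 ν G + ENNReal.ofReal ε) ∧
            perimOpen ν V Set.univ ≤ ENNReal.ofReal C1 * (capa1 ν G + ENNReal.ofReal ε) := by
  exact ⟨24, by norm_num, fun Y _ _ _ ν _ hD hP G ε hε => by
    simpa using
      exists_open_cover_of_finite_perimeter_general hD hP G (ENNReal.ofReal_pos.2 hε).ne'⟩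

end PaperBV
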